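/- Let $n\geq 1$, $s\in(0,1)$, $e\in\partial B_1\subset\mathbb{R}^n$, $\omega\in\partial B_1$ and $\varepsilon_o>0$ be such that $e+\varepsilon\omega\in B_1$ for all $\varepsilon\in(0,\varepsilon_o]$. Let $\alpha\in(0,1)$ and $f\in C^\alpha(\mathbb{R}^n)$ with $f=0$ outside $B_1$. Let $u\in C(\mathbb{R}^n)$ satisfy $u=0$ in $\mathbb{R}^n\setminus B_1$ and $(-\Delta)^s u(x)=f(x)$ for every $x\in B_1$ (the principal-value integral converging for every $x\in B_1$). Then $\lim_{\varepsilon\searrow0}\varepsilon^{-s}\,u(e+\varepsilon\omega)=\kappa(n,s)\,(-2\,e\cdot\omega)^s\int_{B_1}f(z)\,\frac{(1-|z|^2)^s}{s\,|z-e|^n}\,dz$, where $\kappa(n,s)=\frac{\Gamma(n/2)}{4^s\pi^{n/2}\Gamma(s)^2}$. -/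

import Mathlib

open MeasureTheory Filter Metric Set
open scoped RealInnerProductSpace

/-- The normalizing constant `C(n,s)` of the fractional Laplacian. -/
noncomputable def fracC (n : ℕ) (s : ℝ) : ℝ :=
  4 ^ s * s * Real.Gamma ((n : ℝ) / 2 + s) / (Real.pi ^ ((n : ℝ) / 2) * Real.Gamma (1 - s))

/-- `HasFracLap n s u x L` : the principal value limit defining `(-Δ)^s u (x)`
exists and equals `L`. -/
def HasFracLap (n : ℕ) (s : ℝ) (u : EuclideanSpace ℝ (Fin n) → ℝ)
    (x : EuclideanSpace ℝ (Fin n)) (L : ℝ) : Prop :=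
  Tendsto (fun ρ : ℝ =>
      fracC n s * ∫ y in {y : EuclideanSpace ℝ (Fin n) | ρ ≤ ‖y‖},
        (u x - u (x + y)) / ‖y‖ ^ ((n : ℝ) + 2 * s))
    (nhdsWithin 0 (Set.Ioi 0)) (nhds L)

/-- The constant `κ(n,s) = Γ(n/2) / (4^s π^{n/2} Γ(s)²)`. -/
noncomputable def kappaC (n : ℕ) (s : ℝ) : ℝ :=
  Real.Gamma ((n : ℝ) / 2) / (4 ^ s * Real.pi ^ ((n : ℝ) / 2) * Real.Gamma s ^ 2)

open scoped ENNReal Topology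

section Polar

variable {E : Type*} [NormedAddCommGroup E] [InnerProductSpace ℝ E] [FiniteDimensional ℝ E]
  [MeasurableSpace E] [BorelSpace E]

/-- Integration in polar coordinates. -/
theorem lintegral_polar [Nontrivial E] {g : E → ℝ≥0∞} (hg : Measurable g) :
    ∫⁻ x, g x = ∫⁻ θ : sphere (0 : E) 1, (∫⁻ t in Ioi (0 : ℝ),
      ENNReal.ofReal (t ^ (Module.finrank ℝ E - 1)) * g (t • (θ : E)))
        ∂(volume : Measure E).toSphere := by
  have hmp := (volume : Measure E).measurePreserving_homeomorphUnitSphereProd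
  have h1 : ∫⁻ x, g x = ∫⁻ x : ({(0 : E)}ᶜ : Set E), g x ∂((volume : Measure E).comap (↑)) := by
    rw [lintegral_subtype_comap (measurableSet_singleton _).compl, restrict_compl_singleton]
  have h2 : ∀ x : ({(0 : E)}ᶜ : Set E), g x =
      (fun q : sphere (0 : E) 1 × Ioi (0 : ℝ) => g (q.2.1 • (q.1 : E)))
        (homeomorphUnitSphereProd E x) := by
    intro x
    have hx : ‖(x : E)‖ ≠ 0 := norm_ne_zero_iff.2 x.2
    simp [smul_smul, hx]
  have hm : Measurable (fun q : sphere (0 : E) 1 × Ioi (0 : ℝ) => g (q.2.1 • (q.1 : E))) := by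
    fun_prop
  rw [h1, lintegral_congr h2, hmp.lintegral_comp hm, lintegral_prod _ hm.aemeasurable]
  refine lintegral_congr fun θ => ?_
  rw [Measure.volumeIoiPow, lintegral_withDensity_eq_lintegral_mul _ (by fun_prop) (by fun_prop)]
  simp only [Pi.mul_apply]
  rw [lintegral_subtype_comap measurableSet_Ioi
    (fun t : ℝ => ENNReal.ofReal (t ^ (Module.finrank ℝ E - 1)) * g (t • (θ : E)))]

theorem two_mul_lintegral_polar [Nontrivial E] {g : E → ℝ≥0∞} (hg : Measurable g) :
    2 * ∫⁻ x, g x = ∫⁻ θ : sphere (0 : E) 1, (∫⁻ t in Ioi (0 : ℝ),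
      ENNReal.ofReal (t ^ (Module.finrank ℝ E - 1)) * (g (t • (θ : E)) + g (-(t • (θ : E)))))
        ∂(volume : Measure E).toSphere := by
  have h : 2 * ∫⁻ x, g x = ∫⁻ x, (g x + g (-x)) := by
    rw [lintegral_add_left hg, two_mul, lintegral_neg_eq_self (μ := (volume : Measure E)) g]
  rw [h, lintegral_polar (by fun_prop)]

theorem two_mul_lintegral_le_of_forall_dir [Nontrivial E] {g : E → ℝ≥0∞} (hg : Measurable g)
    {C : ℝ≥0∞} (h : ∀ θ : E, ‖θ‖ = 1 → ∫⁻ t in Ioi (0 : ℝ),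
      ENNReal.ofReal (t ^ (Module.finrank ℝ E - 1)) * (g (t • θ) + g (-(t • θ))) ≤ C) :
    2 * ∫⁻ x, g x ≤ C * (volume : Measure E).toSphere univ := by
  rw [two_mul_lintegral_polar hg]
  refine (lintegral_mono fun θ : sphere (0 : E) 1 => h θ (norm_eq_of_mem_sphere θ)).trans ?_
  simp

theorem le_two_mul_lintegral_of_forall_dir [Nontrivial E] {g : E → ℝ≥0∞} (hg : Measurable g)
    {C : ℝ≥0∞} (h : ∀ θ : E, ‖θ‖ = 1 → C ≤ ∫⁻ t in Ioi (0 : ℝ),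
      ENNReal.ofReal (t ^ (Module.finrank ℝ E - 1)) * (g (t • θ) + g (-(t • θ)))) :
    C * (volume : Measure E).toSphere univ ≤ 2 * ∫⁻ x, g x := by
  rw [two_mul_lintegral_polar hg]
  refine le_trans ?_ (lintegral_mono fun θ : sphere (0 : E) 1 => h θ (norm_eq_of_mem_sphere θ))
  simp

end Polar

theorem lintegral_comp_quadratic (β : ℝ) {H : ℝ → ℝ≥0∞} (hH : ∀ y ≤ 0, H y = 0) :
    ∫⁻ t in Ioi (0 : ℝ), ENNReal.ofReal (1 / t) * H (t ^ 2 + 2 * β * t) =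
      ∫⁻ y in Ioi (0 : ℝ), ENNReal.ofReal
        (1 / (2 * √(β ^ 2 + y) * (√(β ^ 2 + y) - β))) * H y := by
  set φ : ℝ → ℝ := fun y => √(β ^ 2 + y) - β with hφ
  have hpos : ∀ y ∈ Ioi (0 : ℝ), 0 < φ y := by
    intro y hy
    have : |β| < √(β ^ 2 + y) := by
      rw [← Real.sqrt_sq_eq_abs]
      exact Real.sqrt_lt_sqrt (sq_nonneg _) (by simpa using hy)
    have := le_abs_self β
    simp only [hφ]; linarith
  have hsq : ∀ y ∈ Ioi (0 : ℝ), φ y ^ 2 + 2 * β * φ y = y := by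
    intro y hy
    have : √(β ^ 2 + y) ^ 2 = β ^ 2 + y := Real.sq_sqrt (by have := hy.out; positivity)
    simp only [hφ]; linear_combination this
  have hder : ∀ y ∈ Ioi (0 : ℝ), HasDerivWithinAt φ (1 / (2 * √(β ^ 2 + y))) (Ioi 0) y := by
    intro y hy
    have h0 : β ^ 2 + y ≠ 0 := by have := hy.out; positivity
    exact (((((hasDerivAt_id y).const_add (β ^ 2)).sqrt h0).sub_const β)).hasDerivWithinAt
  have hinj : InjOn φ (Ioi 0) := by
    intro y hy z hz h
    rw [← hsq y hy, ← hsq z hz, h]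
  have himg : φ '' (Ioi 0) = Ioi 0 ∩ {t | 0 < t ^ 2 + 2 * β * t} := by
    ext t
    constructor
    · rintro ⟨y, hy, rfl⟩
      exact ⟨hpos y hy, by simpa [hsq y hy] using hy⟩
    · rintro ⟨ht, ht'⟩
      have ht0 : 0 < t := ht
      have ht1 : 0 < t ^ 2 + 2 * β * t := ht'
      refine ⟨t ^ 2 + 2 * β * t, ht', ?_⟩
      have hb : 0 ≤ t + β := by nlinarith
      simp only [hφ]
      rw [show β ^ 2 + (t ^ 2 + 2 * β * t) = (t + β) ^ 2 by ring, Real.sqrt_sq hb]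
      ring
  have key := lintegral_image_eq_lintegral_abs_deriv_mul measurableSet_Ioi hder hinj
    (fun t => ENNReal.ofReal (1 / t) * H (t ^ 2 + 2 * β * t))
  have hmeas : MeasurableSet {t : ℝ | 0 < t ^ 2 + 2 * β * t} :=
    measurableSet_lt measurable_const (by fun_prop)
  have e1 : ∫⁻ t in Ioi (0 : ℝ), ENNReal.ofReal (1 / t) * H (t ^ 2 + 2 * β * t) =
      ∫⁻ t in φ '' (Ioi 0), ENNReal.ofReal (1 / t) * H (t ^ 2 + 2 * β * t) := by
    rw [himg, inter_comm, ← Measure.restrict_restrict hmeas, ← lintegral_indicator hmeas]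
    refine lintegral_congr fun t => ?_
    by_cases ht : 0 < t ^ 2 + 2 * β * t
    · rw [indicator_of_mem (by exact ht)]
    · rw [indicator_of_notMem (by exact ht), hH _ (not_lt.1 ht), mul_zero]
  rw [e1, key]
  refine setLIntegral_congr_fun measurableSet_Ioi fun y hy => ?_
  have hy0 : 0 < √(β ^ 2 + y) := Real.sqrt_pos.2 (by have := hy.out; positivity)
  have hp := hpos y hy
  rw [hsq y hy, ← mul_assoc, ← ENNReal.ofReal_mul (abs_nonneg _), abs_of_pos (by positivity)]
  congr 2
  simp only [hφ] at hp ⊢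
  field_simp

theorem lintegral_comp_quadratic_add (β : ℝ) {H : ℝ → ℝ≥0∞} (hHm : Measurable H)
    (hH : ∀ y ≤ 0, H y = 0) :
    ∫⁻ t in Ioi (0 : ℝ), ENNReal.ofReal (1 / t) *
        (H (t ^ 2 + 2 * β * t) + H (t ^ 2 - 2 * β * t)) =
      ∫⁻ y in Ioi (0 : ℝ), ENNReal.ofReal (1 / y) * H y := by
  simp only [mul_add]
  have h2 := lintegral_comp_quadratic (-β) hH
  have h2' : ∀ t : ℝ, t ^ 2 + 2 * -β * t = t ^ 2 - 2 * β * t := fun t => by ring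
  simp only [h2', neg_sq, sub_neg_eq_add] at h2
  rw [lintegral_add_left (by fun_prop), lintegral_comp_quadratic β hH, h2,
    ← lintegral_add_left (by fun_prop)]
  refine setLIntegral_congr_fun measurableSet_Ioi fun y hy => ?_
  have hy' : 0 < y := hy
  have habs : |β| < √(β ^ 2 + y) := by
    rw [← Real.sqrt_sq_eq_abs]
    exact Real.sqrt_lt_sqrt (sq_nonneg _) (by simpa using hy)
  have := abs_lt.1 habs
  have h3 : 0 < √(β ^ 2 + y) - β := by linarith
  have h4 : 0 < √(β ^ 2 + y) + β := by linarith
  have h5 : 0 < √(β ^ 2 + y) := by linarith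
  have hsq : √(β ^ 2 + y) ^ 2 = β ^ 2 + y := Real.sq_sqrt (by positivity)
  rw [← add_mul, ← ENNReal.ofReal_add (by positivity) (by positivity)]
  congr 2
  field_simp
  linear_combination (-2 * √(β ^ 2 + y)) * hsq

section Polar

variable {E : Type*} [NormedAddCommGroup E] [InnerProductSpace ℝ E] [FiniteDimensional ℝ E]
  [MeasurableSpace E] [BorelSpace E]

/-- A radial function centred at `p` and supported outside the sphere through `c`, integrated
against `‖ζ - c‖ ^ (-d)`. -/
theorem two_mul_lintegral_radial_mul_pole [Nontrivial E] (p c : E) {F : ℝ → ℝ≥0∞}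
    (hFm : Measurable F) (hF : ∀ v ≤ ‖c - p‖ ^ 2, F v = 0) :
    2 * ∫⁻ ζ : E, F (‖ζ - p‖ ^ 2) *
        ENNReal.ofReal (‖ζ - c‖ ^ (-(Module.finrank ℝ E : ℝ))) =
      (∫⁻ y in Ioi (0 : ℝ), ENNReal.ofReal (1 / y) * F (‖c - p‖ ^ 2 + y)) *
        (volume : Measure E).toSphere univ := by
  set d := Module.finrank ℝ E
  have hd : 0 < d := Module.finrank_pos
  set b := c - p with hb
  set g : E → ℝ≥0∞ := fun x => F (‖x + b‖ ^ 2) * ENNReal.ofReal (‖x‖ ^ (-(d : ℝ))) with hg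
  have hgm : Measurable g := by
    have h1 : Measurable fun x : E => ‖x + b‖ ^ 2 := by fun_prop
    have h2 : Measurable fun x : E => ‖x‖ ^ (-(d : ℝ)) := by fun_prop
    exact (hFm.comp h1).mul h2.ennreal_ofReal
  have htr : ∫⁻ ζ : E, F (‖ζ - p‖ ^ 2) * ENNReal.ofReal (‖ζ - c‖ ^ (-(d : ℝ))) = ∫⁻ x, g x := by
    rw [← lintegral_sub_right_eq_self (μ := (volume : Measure E)) g c]
    refine lintegral_congr fun ζ => ?_
    simp [hg, hb]
  have hdir : ∀ θ : E, ‖θ‖ = 1 → ∫⁻ t in Ioi (0 : ℝ),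
      ENNReal.ofReal (t ^ (d - 1)) * (g (t • θ) + g (-(t • θ))) =
      ∫⁻ y in Ioi (0 : ℝ), ENNReal.ofReal (1 / y) * F (‖b‖ ^ 2 + y) := by
    intro θ hθ
    rw [← lintegral_comp_quadratic_add ⟪b, θ⟫ (H := fun y => F (‖b‖ ^ 2 + y)) (by fun_prop)
      (fun y hy => hF _ (by linarith))]
    refine setLIntegral_congr_fun measurableSet_Ioi fun t ht => ?_
    have ht' : 0 < t := ht
    have e1 : ‖t • θ + b‖ ^ 2 = ‖b‖ ^ 2 + (t ^ 2 + 2 * ⟪b, θ⟫ * t) := by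
      rw [norm_add_sq_real, norm_smul, hθ, inner_smul_left, real_inner_comm]
      simp; ring
    have e2 : ‖-(t • θ) + b‖ ^ 2 = ‖b‖ ^ 2 + (t ^ 2 - 2 * ⟪b, θ⟫ * t) := by
      rw [norm_add_sq_real, norm_neg, norm_smul, hθ, inner_neg_left, inner_smul_left,
        real_inner_comm]
      simp; ring
    have e3 : t ^ (d - 1) * t ^ (-(d : ℝ)) = 1 / t := by
      rw [← Real.rpow_natCast, ← Real.rpow_add ht', Nat.cast_pred hd, one_div, ← Real.rpow_neg_one]
      congr 1; ring
    have e4 : ‖t • θ‖ = t := by rw [norm_smul, hθ, mul_one, Real.norm_of_nonneg ht'.le]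
    simp only [hg]
    rw [e1, e2, norm_neg, e4, ← add_mul, mul_left_comm, ← ENNReal.ofReal_mul (by positivity), e3,
      mul_comm]
  rw [htr]
  exact le_antisymm (two_mul_lintegral_le_of_forall_dir hgm fun θ hθ => (hdir θ hθ).le)
    (le_two_mul_lintegral_of_forall_dir hgm fun θ hθ => (hdir θ hθ).ge)

end Polar

section Inversion

variable {E : Type*} [NormedAddCommGroup E] [InnerProductSpace ℝ E]

/-- Inversion in the unit sphere. -/
noncomputable def unitInv (ζ : E) : E := (‖ζ‖ ^ 2)⁻¹ • ζ

theorem unitInv_eq_inversion : (unitInv : E → E) = EuclideanGeometry.inversion 0 1 := by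
  ext ζ
  simp [unitInv, EuclideanGeometry.inversion]

theorem norm_unitInv (ζ : E) : ‖unitInv ζ‖ = ‖ζ‖⁻¹ := by
  rcases eq_or_ne ζ 0 with rfl | h
  · simp [unitInv]
  · have : ‖ζ‖ ≠ 0 := norm_ne_zero_iff.2 h
    rw [unitInv, norm_smul, norm_inv, norm_pow, norm_norm]
    field_simp

theorem unitInv_unitInv (ζ : E) : unitInv (unitInv ζ) = ζ := by
  rw [unitInv_eq_inversion]
  exact EuclideanGeometry.inversion_inversion 0 one_ne_zero ζ

theorem measurable_unitInv [MeasurableSpace E] [BorelSpace E] [SecondCountableTopology E] :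
    Measurable (unitInv : E → E) := by
  unfold unitInv
  fun_prop

theorem image_unitInv_compl_zero : (unitInv : E → E) '' {0}ᶜ = {0}ᶜ := by
  have hne : ∀ ζ : E, ζ ≠ 0 → unitInv ζ ≠ 0 := fun ζ h h0 => h (by
    rw [← unitInv_unitInv ζ, h0]; simp [unitInv])
  ext y
  constructor
  · rintro ⟨ζ, hζ, rfl⟩
    exact hne ζ hζ
  · intro hy
    exact ⟨unitInv y, hne y hy, unitInv_unitInv y⟩

theorem hasFDerivAt_unitInv {ζ : E} (hζ : ζ ≠ 0) :
    HasFDerivAt (unitInv : E → E)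
      ((1 / ‖ζ‖) ^ 2 • ((ℝ ∙ ζ)ᗮ.reflection : E →L[ℝ] E)) ζ := by
  rw [unitInv_eq_inversion]
  simpa using EuclideanGeometry.hasFDerivAt_inversion (c := (0 : E)) (R := 1) hζ

variable [FiniteDimensional ℝ E]

theorem abs_det_fderiv_unitInv {ζ : E} (hζ : ζ ≠ 0) :
    |((1 / ‖ζ‖) ^ 2 • ((ℝ ∙ ζ)ᗮ.reflection : E →L[ℝ] E)).det| =
      ‖ζ‖ ^ (-(2 * Module.finrank ℝ E : ℝ)) := by
  have hpos : 0 < ‖ζ‖ := norm_pos_iff.2 hζ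
  have h1 : |((ℝ ∙ ζ)ᗮ.reflection : E →L[ℝ] E).det| = 1 := by
    have := (ℝ ∙ ζ)ᗮ.det_reflection
    change |LinearMap.det ((ℝ ∙ ζ)ᗮ.reflection.toLinearMap)| = 1
    rw [this, abs_pow]; simp
  rw [ContinuousLinearMap.det, ContinuousLinearMap.toLinearMap_smul, LinearMap.det_smul, abs_mul]
  rw [ContinuousLinearMap.det] at h1
  rw [h1, mul_one, abs_of_pos (by positivity), ← pow_mul, one_div, inv_pow, Real.rpow_neg hpos.le,
    ← Real.rpow_natCast]
  norm_num

variable [MeasurableSpace E] [BorelSpace E] [Nontrivial E]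

theorem lintegral_unitInv (g : E → ℝ≥0∞) :
    ∫⁻ y, g y = ∫⁻ ζ, ENNReal.ofReal (‖ζ‖ ^ (-(2 * Module.finrank ℝ E : ℝ))) * g (unitInv ζ) := by
  have key := lintegral_image_eq_lintegral_abs_det_fderiv_mul (volume : Measure E)
    (measurableSet_singleton (0 : E)).compl
    (fun ζ hζ => (hasFDerivAt_unitInv hζ).hasFDerivWithinAt)
    (Function.LeftInverse.injective (unitInv_unitInv (E := E))).injOn g
  rw [image_unitInv_compl_zero, restrict_compl_singleton] at key
  rw [key]
  conv_lhs => rw [← restrict_compl_singleton (μ := (volume : Measure E)) 0]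
  conv_rhs => rw [← restrict_compl_singleton (μ := (volume : Measure E)) 0]
  exact setLIntegral_congr_fun (measurableSet_singleton (0 : E)).compl fun ζ hζ => by
    rw [abs_det_fderiv_unitInv hζ]

end Inversion

section Beta

theorem lintegral_rpow_Ioc {q T : ℝ} (hq : 0 < q) (hT : 0 ≤ T) :
    ∫⁻ t in Ioc 0 T, ENNReal.ofReal (t ^ (q - 1)) = ENNReal.ofReal (T ^ q / q) := by
  have hintegrable : IntegrableOn (fun t : ℝ => t ^ (q - 1)) (Ioc 0 T) :=
    (intervalIntegrable_iff_integrableOn_Ioc_of_le hT).1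
      (intervalIntegral.intervalIntegrable_rpow' (by linarith))
  rw [← ofReal_integral_eq_lintegral_ofReal hintegrable
    ((ae_restrict_mem measurableSet_Ioc).mono fun t ht => Real.rpow_nonneg ht.1.le _),
    ← intervalIntegral.integral_of_le hT, integral_rpow (Or.inl (by linarith))]
  simp [hq.ne', Real.zero_rpow]

theorem lintegral_rpow_mul_exp_neg {a r : ℝ} (ha : 0 < a) (hr : 0 < r) :
    ∫⁻ t in Ioi (0 : ℝ), ENNReal.ofReal (t ^ (a - 1) * Real.exp (-(r * t))) =
      ENNReal.ofReal (Real.Gamma a * r ^ (-a)) := by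
  have hintegrable : IntegrableOn (fun t : ℝ => t ^ (a - 1) * Real.exp (-(r * t))) (Ioi 0) := by
    have := integrableOn_rpow_mul_exp_neg_mul_rpow (s := a - 1) (p := 1) (b := r) (by linarith)
      one_pos hr
    simpa using this
  rw [← ofReal_integral_eq_lintegral_ofReal hintegrable
    ((ae_restrict_mem measurableSet_Ioi).mono fun t ht =>
      mul_nonneg (Real.rpow_nonneg (le_of_lt ht) _) (Real.exp_pos _).le),
    Real.integral_rpow_mul_exp_neg_mul_Ioi ha hr]
  congr 1
  rw [one_div, Real.inv_rpow hr.le, Real.rpow_neg hr.le, mul_comm]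

/-- Euler's Beta integral over the half line. -/
theorem lintegral_rpow_mul_one_add_rpow {a b : ℝ} (ha : 0 < a) (hb : 0 < b) :
    ∫⁻ y in Ioi (0 : ℝ), ENNReal.ofReal (y ^ (a - 1) * (1 + y) ^ (-(a + b))) =
      ENNReal.ofReal (Real.Gamma a * Real.Gamma b / Real.Gamma (a + b)) := by
  have hG : 0 < Real.Gamma (a + b) := Real.Gamma_pos_of_pos (by linarith)
  have hGa : 0 < Real.Gamma a := Real.Gamma_pos_of_pos ha
  have h1 : ∀ y ∈ Ioi (0 : ℝ), ENNReal.ofReal (Real.Gamma (a + b)) *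
      ENNReal.ofReal (y ^ (a - 1) * (1 + y) ^ (-(a + b))) =
      ∫⁻ t in Ioi (0 : ℝ), ENNReal.ofReal
        (y ^ (a - 1) * (t ^ (a + b - 1) * Real.exp (-((1 + y) * t)))) := by
    intro y hy
    have hy' : 0 < y := hy
    have : ∀ t : ℝ, ENNReal.ofReal (y ^ (a - 1) * (t ^ (a + b - 1) * Real.exp (-((1 + y) * t)))) =
        ENNReal.ofReal (y ^ (a - 1)) * ENNReal.ofReal
          (t ^ (a + b - 1) * Real.exp (-((1 + y) * t))) := fun t =>
      ENNReal.ofReal_mul (by positivity)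
    simp only [this]
    rw [lintegral_const_mul _ (by fun_prop), lintegral_rpow_mul_exp_neg (by linarith) (by linarith),
      ← ENNReal.ofReal_mul hG.le, ← ENNReal.ofReal_mul (by positivity)]
    congr 1; ring
  have h2 : ∀ t ∈ Ioi (0 : ℝ), ∫⁻ y in Ioi (0 : ℝ), ENNReal.ofReal
        (y ^ (a - 1) * (t ^ (a + b - 1) * Real.exp (-((1 + y) * t)))) =
      ENNReal.ofReal (Real.Gamma a) * ENNReal.ofReal (t ^ (b - 1) * Real.exp (-(1 * t))) := by
    intro t ht
    have ht' : 0 < t := ht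
    have : ∀ y : ℝ, ENNReal.ofReal (y ^ (a - 1) * (t ^ (a + b - 1) * Real.exp (-((1 + y) * t)))) =
        ENNReal.ofReal (t ^ (a + b - 1) * Real.exp (-(1 * t))) * ENNReal.ofReal
          (y ^ (a - 1) * Real.exp (-(t * y))) := fun y => by
      rw [← ENNReal.ofReal_mul (by positivity)]
      congr 1
      rw [show -((1 + y) * t) = -(1 * t) + -(t * y) by ring, Real.exp_add]
      ring
    simp only [this]
    rw [lintegral_const_mul _ (by fun_prop), lintegral_rpow_mul_exp_neg ha ht',
      ← ENNReal.ofReal_mul (by positivity), ← ENNReal.ofReal_mul hGa.le]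
    congr 1
    rw [show a + b - 1 = (b - 1) + a by ring, Real.rpow_add ht', Real.rpow_neg ht'.le]
    have : t ^ a ≠ 0 := (Real.rpow_pos_of_pos ht' a).ne'
    field_simp
  have h3 : ENNReal.ofReal (Real.Gamma (a + b)) *
      ∫⁻ y in Ioi (0 : ℝ), ENNReal.ofReal (y ^ (a - 1) * (1 + y) ^ (-(a + b))) =
      ENNReal.ofReal (Real.Gamma a * Real.Gamma b) := by
    rw [← lintegral_const_mul _ (by fun_prop), setLIntegral_congr_fun measurableSet_Ioi h1,
      lintegral_lintegral_swap (by fun_prop), setLIntegral_congr_fun measurableSet_Ioi h2,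
      lintegral_const_mul _ (by fun_prop), lintegral_rpow_mul_exp_neg hb one_pos,
      ← ENNReal.ofReal_mul hGa.le]
    simp
  rw [ENNReal.ofReal_div_of_pos hG, ← h3, mul_comm, ENNReal.mul_div_cancel_right]
  · simpa using hG
  · simp

end Beta

section Ball

variable {E : Type*} [NormedAddCommGroup E] [InnerProductSpace ℝ E] [FiniteDimensional ℝ E]
  [Nontrivial E]

theorem lintegral_dir_ball_rpow {s R : ℝ} (hs : 0 < s) {p θ : E} (hθ : ‖θ‖ = 1) (hp : ‖p‖ < R) :
    ∫⁻ t in Ioi (0 : ℝ), ENNReal.ofReal (t ^ (Module.finrank ℝ E - 1)) *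
        (closedBall p R).indicator
          (fun ζ => ENNReal.ofReal (‖ζ‖ ^ (2 * s - Module.finrank ℝ E))) (t • θ) =
      ENNReal.ofReal
        ((√(R ^ 2 - ‖p‖ ^ 2 + ⟪p, θ⟫ ^ 2) + ⟪p, θ⟫) ^ (2 * s) / (2 * s)) := by
  set β := ⟪p, θ⟫
  have hR : 0 < R ^ 2 - ‖p‖ ^ 2 := by nlinarith [norm_nonneg p]
  set m := √(R ^ 2 - ‖p‖ ^ 2 + β ^ 2) with hm
  have hm2 : m ^ 2 = R ^ 2 - ‖p‖ ^ 2 + β ^ 2 := Real.sq_sqrt (by positivity)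
  have hmβ : |β| < m := by
    rw [← Real.sqrt_sq_eq_abs]
    exact Real.sqrt_lt_sqrt (sq_nonneg _) (by linarith)
  have hmb := abs_lt.1 hmβ
  have hd : 0 < Module.finrank ℝ E := Module.finrank_pos
  rw [← lintegral_rpow_Ioc (by positivity) (by linarith), ← Ioi_inter_Iic, inter_comm,
    ← Measure.restrict_restrict measurableSet_Iic, ← lintegral_indicator measurableSet_Iic]
  refine setLIntegral_congr_fun measurableSet_Ioi fun t ht => ?_
  have ht' : 0 < t := ht
  have hiff : t • θ ∈ closedBall p R ↔ t ∈ Iic (m + β) := by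
    have hsq : ‖t • θ - p‖ ^ 2 = t ^ 2 - 2 * β * t + ‖p‖ ^ 2 := by
      rw [norm_sub_sq_real, norm_smul, hθ, inner_smul_left, real_inner_comm]
      simp; ring
    rw [mem_closedBall, dist_eq_norm, mem_Iic,
      ← sq_le_sq₀ (norm_nonneg _) (by linarith [norm_nonneg p]), hsq]
    constructor
    · intro h
      have : (t - β) ^ 2 ≤ m ^ 2 := by nlinarith
      linarith [abs_le_of_sq_le_sq' this (by linarith [abs_nonneg β])]
    · intro h
      have : (t - β) ^ 2 ≤ m ^ 2 := sq_le_sq' (by linarith) (by linarith)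
      nlinarith
  by_cases h : t ∈ Iic (m + β)
  · rw [indicator_of_mem h, indicator_of_mem (hiff.2 h), norm_smul, hθ, mul_one,
      Real.norm_of_nonneg ht'.le, ← ENNReal.ofReal_mul (by positivity), ← Real.rpow_natCast,
      ← Real.rpow_add ht', Nat.cast_pred hd]
    congr 2; ring
  · rw [indicator_of_notMem h, indicator_of_notMem (fun h' => h (hiff.1 h')), mul_zero]

theorem rpow_two_mul {x : ℝ} (hx : 0 ≤ x) (s : ℝ) : x ^ (2 * s) = (x ^ 2) ^ s := by
  rw [Real.rpow_mul hx, Real.rpow_two]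

theorem rpow_add_rpow_le {s m β : ℝ} (hs : s ∈ Ioo (0 : ℝ) 1) (h : |β| ≤ m) :
    (m + β) ^ (2 * s) + (m - β) ^ (2 * s) ≤ 2 * (m ^ 2 + β ^ 2) ^ s := by
  have := abs_le.1 h
  have hhalf : (0 : ℝ) ≤ 1 / 2 := by norm_num
  have hc := (Real.concaveOn_rpow hs.1.le hs.2.le).2 (mem_Ici.2 (sq_nonneg (m + β)))
    (mem_Ici.2 (sq_nonneg (m - β))) hhalf hhalf (by norm_num)
  simp only [smul_eq_mul] at hc
  rw [show 1 / 2 * (m + β) ^ 2 + 1 / 2 * (m - β) ^ 2 = m ^ 2 + β ^ 2 by ring] at hc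
  rw [rpow_two_mul (by linarith), rpow_two_mul (by linarith)]
  linarith

theorem le_rpow_add_rpow {s m β : ℝ} (h : |β| ≤ m) :
    2 * (m ^ 2 - β ^ 2) ^ s ≤ (m + β) ^ (2 * s) + (m - β) ^ (2 * s) := by
  have := abs_le.1 h
  have h1 : 0 ≤ m + β := by linarith
  have h2 : 0 ≤ m - β := by linarith
  rw [show m ^ 2 - β ^ 2 = (m + β) * (m - β) by ring, Real.mul_rpow h1 h2, rpow_two_mul h1,
    rpow_two_mul h2, ← Real.rpow_natCast, ← Real.rpow_natCast, ← Real.rpow_mul h1,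
    ← Real.rpow_mul h2, mul_comm _ s, Real.rpow_mul h1, Real.rpow_mul h2, Real.rpow_natCast,
    Real.rpow_natCast]
  nlinarith [sq_nonneg ((m + β) ^ s - (m - β) ^ s)]

end Ball

section Ball

variable {E : Type*} [NormedAddCommGroup E] [InnerProductSpace ℝ E] [FiniteDimensional ℝ E]
  [MeasurableSpace E] [BorelSpace E] [Nontrivial E]

theorem lintegral_dir_ball_rpow_add {s R : ℝ} (hs : 0 < s) {p θ : E} (hθ : ‖θ‖ = 1)
    (hp : ‖p‖ < R) :
    ∫⁻ t in Ioi (0 : ℝ), ENNReal.ofReal (t ^ (Module.finrank ℝ E - 1)) *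
        ((closedBall p R).indicator
          (fun ζ => ENNReal.ofReal (‖ζ‖ ^ (2 * s - Module.finrank ℝ E))) (t • θ) +
        (closedBall p R).indicator
          (fun ζ => ENNReal.ofReal (‖ζ‖ ^ (2 * s - Module.finrank ℝ E))) (-(t • θ))) =
      ENNReal.ofReal
        (((√(R ^ 2 - ‖p‖ ^ 2 + ⟪p, θ⟫ ^ 2) + ⟪p, θ⟫) ^ (2 * s) +
          (√(R ^ 2 - ‖p‖ ^ 2 + ⟪p, θ⟫ ^ 2) - ⟪p, θ⟫) ^ (2 * s)) / (2 * s)) := by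
  have hR : 0 < R ^ 2 - ‖p‖ ^ 2 := by nlinarith [norm_nonneg p]
  have hmβ : |⟪p, θ⟫| < √(R ^ 2 - ‖p‖ ^ 2 + ⟪p, θ⟫ ^ 2) := by
    rw [← Real.sqrt_sq_eq_abs]
    exact Real.sqrt_lt_sqrt (sq_nonneg _) (by linarith)
  have hmb := abs_lt.1 hmβ
  have h1 := lintegral_dir_ball_rpow hs hθ hp
  have h2 := lintegral_dir_ball_rpow hs (θ := -θ) (by rwa [norm_neg]) hp
  have h3 : 0 ≤ √(R ^ 2 - ‖p‖ ^ 2 + ⟪p, θ⟫ ^ 2) + ⟪p, θ⟫ := by linarith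
  have h4 : 0 ≤ √(R ^ 2 - ‖p‖ ^ 2 + ⟪p, θ⟫ ^ 2) - ⟪p, θ⟫ := by linarith
  simp only [smul_neg, inner_neg_right, neg_sq, ← sub_eq_add_neg] at h2
  simp only [mul_add]
  have hm : Measurable ((closedBall p R).indicator
      (fun ζ => ENNReal.ofReal (‖ζ‖ ^ (2 * s - Module.finrank ℝ E)))) :=
    Measurable.indicator (by fun_prop) measurableSet_closedBall
  rw [lintegral_add_left (by fun_prop), h1, h2, ← ENNReal.ofReal_add (by positivity)
    (by positivity), add_div]

theorem two_mul_lintegral_ball_rpow_le {s R : ℝ} (hs : s ∈ Ioo (0 : ℝ) 1) {p : E}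
    (hp : ‖p‖ < R) :
    2 * ∫⁻ ζ in closedBall p R, ENNReal.ofReal (‖ζ‖ ^ (2 * s - Module.finrank ℝ E)) ≤
      ENNReal.ofReal ((R ^ 2 + ‖p‖ ^ 2) ^ s / s) * (volume : Measure E).toSphere univ := by
  rw [← lintegral_indicator measurableSet_closedBall]
  refine two_mul_lintegral_le_of_forall_dir
    (Measurable.indicator (by fun_prop) measurableSet_closedBall) fun θ hθ => ?_
  rw [lintegral_dir_ball_rpow_add hs.1 hθ hp]
  have hs0 := hs.1
  have hR : 0 < R ^ 2 - ‖p‖ ^ 2 := by nlinarith [norm_nonneg p]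
  have h0 : |⟪p, θ⟫| ≤ √(R ^ 2 - ‖p‖ ^ 2 + ⟪p, θ⟫ ^ 2) := by
    rw [← Real.sqrt_sq_eq_abs]
    exact Real.sqrt_le_sqrt (by linarith)
  have h1 := rpow_add_rpow_le hs h0
  rw [Real.sq_sqrt (by positivity)] at h1
  have hin : ⟪p, θ⟫ ^ 2 ≤ ‖p‖ ^ 2 := by
    have := abs_real_inner_le_norm p θ
    rw [hθ, mul_one] at this
    exact sq_le_sq' (by linarith [abs_le.1 this]) (by linarith [abs_le.1 this])
  have h2 : (R ^ 2 - ‖p‖ ^ 2 + ⟪p, θ⟫ ^ 2 + ⟪p, θ⟫ ^ 2) ^ s ≤ (R ^ 2 + ‖p‖ ^ 2) ^ s :=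
    Real.rpow_le_rpow (by positivity) (by linarith) hs0.le
  refine ENNReal.ofReal_le_ofReal ?_
  rw [div_le_div_iff₀ (by positivity) hs0]
  nlinarith

theorem le_two_mul_lintegral_ball_rpow {s R : ℝ} (hs : s ∈ Ioo (0 : ℝ) 1) {p : E}
    (hp : ‖p‖ < R) :
    ENNReal.ofReal ((R ^ 2 - ‖p‖ ^ 2) ^ s / s) * (volume : Measure E).toSphere univ ≤
      2 * ∫⁻ ζ in closedBall p R, ENNReal.ofReal (‖ζ‖ ^ (2 * s - Module.finrank ℝ E)) := by
  rw [← lintegral_indicator measurableSet_closedBall]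
  refine le_two_mul_lintegral_of_forall_dir
    (Measurable.indicator (by fun_prop) measurableSet_closedBall) fun θ hθ => ?_
  rw [lintegral_dir_ball_rpow_add hs.1 hθ hp]
  have hs0 := hs.1
  have hR : 0 < R ^ 2 - ‖p‖ ^ 2 := by nlinarith [norm_nonneg p]
  have h0 : |⟪p, θ⟫| ≤ √(R ^ 2 - ‖p‖ ^ 2 + ⟪p, θ⟫ ^ 2) := by
    rw [← Real.sqrt_sq_eq_abs]
    exact Real.sqrt_le_sqrt (by linarith)
  have h1 := le_rpow_add_rpow (s := s) h0
  rw [Real.sq_sqrt (by positivity), add_sub_cancel_right] at h1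
  refine ENNReal.ofReal_le_ofReal ?_
  rw [div_le_div_iff₀ hs0 (by positivity)]
  nlinarith

/-- The defect `T ^ s / s - ∫₀ᵀ t ^ s / (t + δ) dt`. -/
noncomputable def poleDefect (s δ T : ℝ) : ℝ := ∫ t in Ioc 0 T, δ * t ^ (s - 1) / (t + δ)

theorem integrableOn_pole {s δ : ℝ} (hs : s ∈ Ioo (0 : ℝ) 1) (hδ : 0 < δ) :
    IntegrableOn (fun t : ℝ => δ * t ^ (s - 1) / (t + δ)) (Ioi 0) ∧
      ∫ t in Ioi (0 : ℝ), δ * t ^ (s - 1) / (t + δ) =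
        δ ^ s * (Real.Gamma s * Real.Gamma (1 - s)) := by
  have hs0 := hs.1
  have hs1 : 0 < 1 - s := by linarith [hs.2]
  have hG := Real.Gamma_pos_of_pos hs0
  have hG1 := Real.Gamma_pos_of_pos hs1
  have key := lintegral_rpow_mul_one_add_rpow hs0 hs1
  rw [show s + (1 - s) = 1 by ring, Real.Gamma_one, div_one] at key
  have hnn : 0 ≤ᵐ[volume.restrict (Ioi (0 : ℝ))] fun y : ℝ => y ^ (s - 1) * (1 + y) ^ (-1 : ℝ) :=
    (ae_restrict_mem measurableSet_Ioi).mono fun y hy => by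
      have : 0 < y := hy
      simp only [Pi.zero_apply]; positivity
  have hm : Measurable fun y : ℝ => y ^ (s - 1) * (1 + y) ^ (-1 : ℝ) := by fun_prop
  have hintegrable : IntegrableOn (fun y : ℝ => y ^ (s - 1) * (1 + y) ^ (-1 : ℝ)) (Ioi 0) := by
    refine ⟨hm.aestronglyMeasurable, ?_⟩
    rw [hasFiniteIntegral_iff_ofReal hnn, key]
    exact ENNReal.ofReal_lt_top
  have hval : ∫ y in Ioi (0 : ℝ), y ^ (s - 1) * (1 + y) ^ (-1 : ℝ) =
      Real.Gamma s * Real.Gamma (1 - s) := by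
    rw [integral_eq_lintegral_of_nonneg_ae hnn hm.aestronglyMeasurable, key,
      ENNReal.toReal_ofReal (by positivity)]
  have heq : EqOn (fun t : ℝ => δ * t ^ (s - 1) / (t + δ))
      (fun t => δ ^ (s - 1) * ((δ⁻¹ * t) ^ (s - 1) * (1 + δ⁻¹ * t) ^ (-1 : ℝ))) (Ioi 0) := by
    intro t ht
    have ht' : 0 < t := ht
    simp only
    rw [Real.mul_rpow (by positivity) ht'.le, Real.inv_rpow hδ.le, Real.rpow_neg_one]
    have : δ ^ (s - 1) ≠ 0 := (Real.rpow_pos_of_pos hδ _).ne'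
    field_simp
    ring
  constructor
  · rw [integrableOn_congr_fun heq measurableSet_Ioi]
    refine Integrable.const_mul ?_ _
    have := (integrableOn_Ioi_comp_mul_left_iff
      (fun y : ℝ => y ^ (s - 1) * (1 + y) ^ (-1 : ℝ)) 0 (inv_pos.2 hδ)).2 (by simpa using hintegrable)
    exact this
  · rw [setIntegral_congr_fun measurableSet_Ioi heq, integral_const_mul,
      integral_comp_mul_left_Ioi (fun y : ℝ => y ^ (s - 1) * (1 + y) ^ (-1 : ℝ)) 0 (inv_pos.2 hδ),
      mul_zero, hval, inv_inv, smul_eq_mul, ← mul_assoc, Real.rpow_sub_one hδ.ne']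
    field_simp

theorem tendsto_poleDefect {s δ : ℝ} (hs : s ∈ Ioo (0 : ℝ) 1) (hδ : 0 < δ) :
    Tendsto (poleDefect s δ) atTop (𝓝 (δ ^ s * (Real.Gamma s * Real.Gamma (1 - s)))) := by
  obtain ⟨hi, hv⟩ := integrableOn_pole hs hδ
  rw [← hv]
  refine (intervalIntegral_tendsto_integral_Ioi 0 hi tendsto_id).congr' ?_
  filter_upwards [eventually_ge_atTop 0] with T hT
  exact intervalIntegral.integral_of_le hT

theorem integrableOn_rpow_div_add {s δ T : ℝ} (hs : s ∈ Ioo (0 : ℝ) 1) (hδ : 0 < δ)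
    (hT : 0 ≤ T) : IntegrableOn (fun t : ℝ => t ^ s / (t + δ)) (Ioc 0 T) ∧
      ∫ t in Ioc 0 T, t ^ s / (t + δ) = T ^ s / s - poleDefect s δ T := by
  have h1 : IntegrableOn (fun t : ℝ => t ^ (s - 1)) (Ioc 0 T) :=
    (intervalIntegrable_iff_integrableOn_Ioc_of_le hT).1
      (intervalIntegral.intervalIntegrable_rpow' (by linarith [hs.1]))
  have h2 := (integrableOn_pole hs hδ).1.mono_set (Ioc_subset_Ioi_self : Ioc 0 T ⊆ Ioi 0)
  have heq : EqOn (fun t : ℝ => t ^ s / (t + δ))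
      (fun t => t ^ (s - 1) - δ * t ^ (s - 1) / (t + δ)) (Ioc 0 T) := by
    intro t ht
    have : 0 < t := ht.1
    simp only
    rw [Real.rpow_sub_one this.ne']
    field_simp
    ring
  refine ⟨(integrableOn_congr_fun heq measurableSet_Ioc).2 (h1.sub h2), ?_⟩
  rw [setIntegral_congr_fun measurableSet_Ioc heq, integral_sub h1 h2,
    ← intervalIntegral.integral_of_le hT, integral_rpow (Or.inl (by linarith [hs.1]))]
  simp [hs.1.ne', Real.zero_rpow, poleDefect]

theorem rpow_div_add_nonneg_ae {s δ T : ℝ} (hδ : 0 < δ) :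
    0 ≤ᵐ[volume.restrict (Ioc 0 T)] fun t : ℝ => t ^ s / (t + δ) :=
  (ae_restrict_mem measurableSet_Ioc).mono fun t ht => by
    have : 0 < t := ht.1
    simp only [Pi.zero_apply]; positivity

theorem rpow_div_sub_poleDefect_nonneg {s δ T : ℝ} (hs : s ∈ Ioo (0 : ℝ) 1) (hδ : 0 < δ)
    (hT : 0 ≤ T) : 0 ≤ T ^ s / s - poleDefect s δ T := by
  rw [← (integrableOn_rpow_div_add hs hδ hT).2]
  exact integral_nonneg_of_ae (rpow_div_add_nonneg_ae hδ)

theorem lintegral_rpow_div_add {s δ T : ℝ} (hs : s ∈ Ioo (0 : ℝ) 1) (hδ : 0 < δ) (hT : 0 ≤ T) :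
    ∫⁻ t in Ioc 0 T, ENNReal.ofReal (t ^ s / (t + δ)) =
      ENNReal.ofReal (T ^ s / s - poleDefect s δ T) := by
  obtain ⟨hi, hv⟩ := integrableOn_rpow_div_add hs hδ hT
  rw [← ofReal_integral_eq_lintegral_ofReal hi (rpow_div_add_nonneg_ae hδ), hv]

theorem two_mul_lintegral_ball_pole {s R r δ : ℝ} (hs : s ∈ Ioo (0 : ℝ) 1) {p c : E}
    (hδ : 0 < δ) (hrR : 0 ≤ R ^ 2 - r ^ 2) (hR : 0 ≤ R) (hδr : r ^ 2 - ‖c - p‖ ^ 2 = δ) :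
    2 * ∫⁻ ζ in closedBall p R, ENNReal.ofReal
        ((max (‖ζ - p‖ ^ 2 - r ^ 2) 0) ^ s * ‖ζ - c‖ ^ (-(Module.finrank ℝ E : ℝ))) =
      ENNReal.ofReal ((R ^ 2 - r ^ 2) ^ s / s - poleDefect s δ (R ^ 2 - r ^ 2)) *
        (volume : Measure E).toSphere univ := by
  set F : ℝ → ℝ≥0∞ := (Iic (R ^ 2)).indicator
    (fun v => ENNReal.ofReal ((max (v - r ^ 2) 0) ^ s)) with hF
  have hFm : Measurable F := Measurable.indicator (by fun_prop) measurableSet_Iic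
  have h := two_mul_lintegral_radial_mul_pole p c hFm (fun v hv => by
    have : max (v - r ^ 2) 0 = 0 := max_eq_right (by linarith)
    simp only [hF, indicator_apply, this, Real.zero_rpow hs.1.ne', ENNReal.ofReal_zero, ite_self])
  rw [← lintegral_indicator measurableSet_closedBall]
  have e1 : ∀ ζ : E, (closedBall p R).indicator (fun ζ => ENNReal.ofReal
        ((max (‖ζ - p‖ ^ 2 - r ^ 2) 0) ^ s * ‖ζ - c‖ ^ (-(Module.finrank ℝ E : ℝ)))) ζ =
      F (‖ζ - p‖ ^ 2) * ENNReal.ofReal (‖ζ - c‖ ^ (-(Module.finrank ℝ E : ℝ))) := by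
    intro ζ
    have hiff : ζ ∈ closedBall p R ↔ ‖ζ - p‖ ^ 2 ∈ Iic (R ^ 2) := by
      rw [mem_closedBall, dist_eq_norm, mem_Iic, sq_le_sq₀ (norm_nonneg _) hR]
    by_cases hz : ζ ∈ closedBall p R
    · rw [indicator_of_mem hz, hF, indicator_of_mem (hiff.1 hz), ENNReal.ofReal_mul (by positivity)]
    · rw [indicator_of_notMem hz, hF, indicator_of_notMem (fun h' => hz (hiff.2 h')), zero_mul]
  rw [lintegral_congr e1, h]
  congr 1
  rw [← lintegral_rpow_div_add hs hδ hrR]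
  have e2 : ∫⁻ y in Ioi (0 : ℝ), ENNReal.ofReal (1 / y) * F (‖c - p‖ ^ 2 + y) =
      ∫⁻ y, (Ioi 0).indicator (fun y => ENNReal.ofReal (1 / y) * F (‖c - p‖ ^ 2 + y)) y := by
    rw [lintegral_indicator measurableSet_Ioi]
  rw [e2, ← lintegral_add_right_eq_self _ δ, ← lintegral_indicator measurableSet_Ioc]
  refine lintegral_congr fun t => ?_
  have hval : ‖c - p‖ ^ 2 + (t + δ) = t + r ^ 2 := by linarith
  rcases le_or_gt t 0 with ht | ht
  · rw [indicator_of_notMem (s := Ioc 0 (R ^ 2 - r ^ 2)) (fun h' => absurd h'.1 (not_lt.2 ht))]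
    have : max (t + r ^ 2 - r ^ 2) 0 = 0 := max_eq_right (by linarith)
    simp only [hF, indicator_apply, hval, this, Real.zero_rpow hs.1.ne', ENNReal.ofReal_zero,
      ite_self, mul_zero]
  · rw [indicator_of_mem (s := Ioi (0 : ℝ)) (by rw [mem_Ioi]; linarith), hval, hF]
    by_cases hT : t ≤ R ^ 2 - r ^ 2
    · rw [indicator_of_mem (s := Ioc 0 (R ^ 2 - r ^ 2)) ⟨ht, hT⟩,
        indicator_of_mem (by rw [mem_Iic]; linarith), add_sub_cancel_right, max_eq_left ht.le,
        ← ENNReal.ofReal_mul (by positivity)]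
      congr 1; ring
    · rw [indicator_of_notMem (s := Ioc 0 (R ^ 2 - r ^ 2)) (fun h' => hT h'.2),
        indicator_of_notMem (by rw [mem_Iic]; intro h'; exact hT (by linarith)), mul_zero]

end Ball

theorem tendsto_add_rpow_sub_rpow {s : ℝ} (hs : s ∈ Ioo (0 : ℝ) 1) (b c : ℝ) :
    Tendsto (fun X : ℝ => (X + b) ^ s - (X + c) ^ s) atTop (𝓝 0) := by
  have base : ∀ d : ℝ, 0 ≤ d → Tendsto (fun X : ℝ => (X + d) ^ s - X ^ s) atTop (𝓝 0) := by
    intro d hd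
    have hlim : Tendsto (fun X : ℝ => s * d * X ^ (s - 1)) atTop (𝓝 0) := by
      have := (tendsto_rpow_neg_atTop (show 0 < 1 - s by linarith [hs.2])).const_mul (s * d)
      simpa using this
    refine squeeze_zero' ?_ ?_ hlim
    · filter_upwards [eventually_gt_atTop 0] with X hX
      exact sub_nonneg.2 (Real.rpow_le_rpow hX.le (by linarith) hs.1.le)
    · filter_upwards [eventually_gt_atTop 0] with X hX
      have h0 : 0 ≤ d / X := by positivity
      have h1 : (1 + d / X) ^ s ≤ 1 + s * (d / X) :=
        rpow_one_add_le_one_add_mul_self (by linarith) hs.1.le hs.2.le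
      have h2 : (X + d) ^ s = X ^ s * (1 + d / X) ^ s := by
        rw [← Real.mul_rpow hX.le (by positivity)]
        congr 1; field_simp
      have hX' : 0 < X ^ s := Real.rpow_pos_of_pos hX s
      rw [h2, Real.rpow_sub_one hX.ne']
      have := mul_le_mul_of_nonneg_left h1 hX'.le
      have h3 : s * d * (X ^ s / X) = X ^ s * (s * (d / X)) := by ring
      linarith
  have hdiff : ∀ b c : ℝ, c ≤ b → Tendsto (fun X : ℝ => (X + b) ^ s - (X + c) ^ s) atTop (𝓝 0) := by
    intro b c hbc
    have := (base (b - c) (by linarith)).comp (tendsto_atTop_add_const_right atTop c tendsto_id)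
    refine this.congr fun X => ?_
    simp only [Function.comp, id]
    congr 2; ring
  rcases le_total c b with h | h
  · exact hdiff b c h
  · simpa using (hdiff c b h).neg

section Geometry

variable {E : Type*} [NormedAddCommGroup E] [InnerProductSpace ℝ E]

theorem one_sub_norm_add_unitInv_sq {x ζ : E} (hx : ‖x‖ < 1) (hζ : ζ ≠ 0) :
    1 - ‖x + unitInv ζ‖ ^ 2 = (1 - ‖x‖ ^ 2) *
      (‖ζ - (1 - ‖x‖ ^ 2)⁻¹ • x‖ ^ 2 - (1 - ‖x‖ ^ 2)⁻¹ ^ 2) / ‖ζ‖ ^ 2 := by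
  have hw : 0 < 1 - ‖x‖ ^ 2 := by nlinarith [norm_nonneg x]
  have hζ' : 0 < ‖ζ‖ := norm_pos_iff.2 hζ
  rw [norm_add_sq_real, norm_sub_sq_real, norm_unitInv, unitInv, inner_smul_right,
    inner_smul_right, norm_smul, real_inner_comm x ζ, Real.norm_of_nonneg (by positivity)]
  field_simp
  ring

theorem norm_add_unitInv_sub {x a ζ : E} (hax : a ≠ x) (hζ : ζ ≠ 0) :
    ‖x + unitInv ζ - a‖ = ‖x - a‖ * ‖ζ - unitInv (a - x)‖ / ‖ζ‖ := by
  have ha : a - x ≠ 0 := sub_ne_zero.2 hax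
  have ha' : unitInv (a - x) ≠ 0 := fun h => ha (by
    rw [← unitInv_unitInv (a - x), h]; simp [unitInv])
  have h := EuclideanGeometry.dist_inversion_inversion hζ ha' 1
  rw [← unitInv_eq_inversion, unitInv_unitInv, dist_zero_right, dist_zero_right,
    dist_eq_norm, dist_eq_norm, norm_unitInv] at h
  rw [show x + unitInv ζ - a = unitInv ζ - (a - x) by abel, h, norm_sub_rev x a]
  have := norm_pos_iff.2 hζ
  have := norm_pos_iff.2 ha
  field_simp

theorem sq_sub_norm_unitInv_sub_sq {x a : E} (hx : ‖x‖ < 1) (hax : a ≠ x) :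
    (1 - ‖x‖ ^ 2)⁻¹ ^ 2 - ‖unitInv (a - x) - (1 - ‖x‖ ^ 2)⁻¹ • x‖ ^ 2 =
      (‖a‖ ^ 2 - 1) / ((1 - ‖x‖ ^ 2) * ‖x - a‖ ^ 2) := by
  have hw : 0 < 1 - ‖x‖ ^ 2 := by nlinarith [norm_nonneg x]
  have ha : a - x ≠ 0 := sub_ne_zero.2 hax
  have ha' : unitInv (a - x) ≠ 0 := fun h => ha (by
    rw [← unitInv_unitInv (a - x), h]; simp [unitInv])
  have h := one_sub_norm_add_unitInv_sq hx ha'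
  rw [unitInv_unitInv, add_sub_cancel, norm_unitInv, norm_sub_rev a x] at h
  have := norm_pos_iff.2 (sub_ne_zero.2 hax.symm)
  rw [eq_div_iff (by positivity), show ‖a‖ ^ 2 - 1 = -(1 - ‖a‖ ^ 2) by ring, h]
  field_simp
  ring

end Geometry

section Profile

variable {E : Type*} [NormedAddCommGroup E] [InnerProductSpace ℝ E]

/-- The function `(1 - |x|²)₊ ^ s |x - a| ^ (-d)`, a multiple of the Dirichlet solution with
right-hand side `|x - a| ^ (-d - 2 * s)` when `1 < |a|`. -/
noncomputable def ballProfile (s : ℝ) (a x : E) : ℝ :=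
  (max (1 - ‖x‖ ^ 2) 0) ^ s * ‖x - a‖ ^ (-(Module.finrank ℝ E : ℝ))

theorem ballProfile_nonneg (s : ℝ) (a x : E) : 0 ≤ ballProfile s a x := by
  unfold ballProfile; positivity

theorem ballProfile_eq_zero {s : ℝ} (hs : 0 < s) (a : E) {x : E} (hx : 1 ≤ ‖x‖) :
    ballProfile s a x = 0 := by
  rw [ballProfile, max_eq_right (by nlinarith), Real.zero_rpow hs.ne', zero_mul]

theorem ballProfile_of_norm_lt {s : ℝ} {a x : E} (hx : ‖x‖ < 1) :
    ballProfile s a x = (1 - ‖x‖ ^ 2) ^ s * ‖x - a‖ ^ (-(Module.finrank ℝ E : ℝ)) := by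
  rw [ballProfile, max_eq_left (by nlinarith [norm_nonneg x])]

theorem ballProfile_le {s : ℝ} (hs : 0 < s) {a : E} (ha : 1 < ‖a‖) (x : E) :
    ballProfile s a x ≤
      (‖a‖ - 1) ^ (-(Module.finrank ℝ E : ℝ)) * (max (1 - ‖x‖ ^ 2) 0) ^ s := by
  rcases lt_or_ge ‖x‖ 1 with hx | hx
  · rw [ballProfile, mul_comm]
    refine mul_le_mul_of_nonneg_right ?_ (by positivity)
    refine Real.rpow_le_rpow_of_nonpos (by linarith) ?_ (by simp)
    have := norm_sub_norm_le a x
    rw [norm_sub_rev]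
    linarith
  · rw [ballProfile_eq_zero hs a hx]
    have : 0 < ‖a‖ - 1 := by linarith
    positivity

theorem continuous_ballProfile {s : ℝ} (hs : 0 < s) {a : E} (ha : 1 < ‖a‖) :
    Continuous (ballProfile s a) := by
  rw [continuous_iff_continuousAt]
  intro x
  have hc : Continuous fun x : E => (max (1 - ‖x‖ ^ 2) 0) ^ s :=
    Continuous.rpow_const (by fun_prop) fun _ => Or.inr hs.le
  rcases eq_or_ne x a with rfl | hxa
  · have : ballProfile s x =ᶠ[𝓝 x] fun _ => 0 := by
      filter_upwards [(isOpen_lt continuous_const continuous_norm).mem_nhds ha] with z hz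
      exact ballProfile_eq_zero hs x (le_of_lt hz)
    exact (continuousAt_const.congr this.symm)
  · refine hc.continuousAt.mul (ContinuousAt.rpow_const (by fun_prop) (Or.inl ?_))
    exact norm_ne_zero_iff.2 (sub_ne_zero.2 hxa)

theorem differentiableAt_ballProfile {s : ℝ} {a x : E} (hx : ‖x‖ < 1) (ha : 1 < ‖a‖) :
    DifferentiableAt ℝ (ballProfile s a) x := by
  have hxa : x - a ≠ 0 := sub_ne_zero.2 fun h => by subst h; linarith
  have hev : ballProfile s a =ᶠ[𝓝 x]
      fun x => (1 - ‖x‖ ^ 2) ^ s * ‖x - a‖ ^ (-(Module.finrank ℝ E : ℝ)) := by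
    filter_upwards [(isOpen_lt continuous_norm continuous_const).mem_nhds hx] with z hz
    exact ballProfile_of_norm_lt hz
  refine DifferentiableAt.congr_of_eventuallyEq ?_ hev
  have hw : 1 - ‖x‖ ^ 2 ≠ 0 := by nlinarith [norm_nonneg x]
  refine DifferentiableAt.mul ?_ ?_
  · refine DifferentiableAt.rpow_const ?_ (Or.inl hw)
    exact (differentiableAt_const _).sub ((contDiff_norm_sq ℝ (n := 1)).differentiable
      (by simp) x)
  · refine DifferentiableAt.rpow_const ?_ (Or.inl (norm_ne_zero_iff.2 hxa))
    exact ((contDiffAt_norm ℝ hxa).differentiableAt (n := 1) (by simp)).comp x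
      (differentiableAt_id.sub_const a)

theorem ballProfile_add_unitInv {s : ℝ} {a x ζ : E} (hx : ‖x‖ < 1) (hax : a ≠ x) (hζ : ζ ≠ 0) :
    ballProfile s a (x + unitInv ζ) * ‖ζ‖ ^ (2 * s - (Module.finrank ℝ E : ℝ)) =
      ballProfile s a x *
        ((max (‖ζ - (1 - ‖x‖ ^ 2)⁻¹ • x‖ ^ 2 - (1 - ‖x‖ ^ 2)⁻¹ ^ 2) 0) ^ s *
          ‖ζ - unitInv (a - x)‖ ^ (-(Module.finrank ℝ E : ℝ))) := by
  have hw : 0 < 1 - ‖x‖ ^ 2 := by nlinarith [norm_nonneg x]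
  have hz : 0 < ‖ζ‖ := norm_pos_iff.2 hζ
  rw [ballProfile_of_norm_lt hx, ballProfile, one_sub_norm_add_unitInv_sq hx hζ,
    norm_add_unitInv_sub hax hζ]
  set M := ‖ζ - (1 - ‖x‖ ^ 2)⁻¹ • x‖ ^ 2 - (1 - ‖x‖ ^ 2)⁻¹ ^ 2
  have hM : max ((1 - ‖x‖ ^ 2) * M / ‖ζ‖ ^ 2) 0 = (1 - ‖x‖ ^ 2) * max M 0 / ‖ζ‖ ^ 2 := by
    rw [mul_div_right_comm, mul_div_right_comm, mul_max_of_nonneg _ _ (by positivity), mul_zero]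
  have hm : 0 ≤ max M 0 := le_max_right _ _
  rw [hM, Real.div_rpow (by positivity) (by positivity), Real.mul_rpow hw.le hm,
    ← rpow_two_mul hz.le, Real.div_rpow (by positivity) hz.le,
    Real.mul_rpow (norm_nonneg _) (norm_nonneg _), sub_eq_add_neg (2 * s), Real.rpow_add hz]
  have h1 : ‖ζ‖ ^ (2 * s) ≠ 0 := (Real.rpow_pos_of_pos hz _).ne'
  have h2 : ‖ζ‖ ^ (-(Module.finrank ℝ E : ℝ)) ≠ 0 := (Real.rpow_pos_of_pos hz _).ne'
  field_simp

end Profile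

section Lintegral

variable {E : Type*} [NormedAddCommGroup E] [InnerProductSpace ℝ E] [FiniteDimensional ℝ E]
  [MeasurableSpace E] [BorelSpace E] [Nontrivial E]

theorem setLIntegral_unitInv {K : Set E} (hK : MeasurableSet K) (q : ℝ) (g : E → ℝ) :
    ∫⁻ y in {y | y ≠ 0 ∧ unitInv y ∈ K}, ENNReal.ofReal (g y / ‖y‖ ^ q) =
      ∫⁻ ζ in K, ENNReal.ofReal
        (g (unitInv ζ) * ‖ζ‖ ^ (q - 2 * (Module.finrank ℝ E : ℝ))) := by
  have hD : MeasurableSet {y : E | y ≠ 0 ∧ unitInv y ∈ K} :=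
    (measurableSet_singleton (0 : E)).compl.inter (measurable_unitInv hK)
  rw [← lintegral_indicator hD, lintegral_unitInv, ← lintegral_indicator hK]
  conv_lhs => rw [← restrict_compl_singleton (μ := (volume : Measure E)) 0]
  conv_rhs => rw [← restrict_compl_singleton (μ := (volume : Measure E)) 0]
  refine setLIntegral_congr_fun (measurableSet_singleton (0 : E)).compl fun ζ hζ => ?_
  have hz : 0 < ‖ζ‖ := norm_pos_iff.2 hζ
  have hne : unitInv ζ ≠ 0 := by rw [← norm_pos_iff, norm_unitInv]; positivity
  by_cases h : ζ ∈ K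
  · have hmem : unitInv ζ ∈ {y : E | y ≠ 0 ∧ unitInv y ∈ K} :=
      ⟨hne, by rwa [unitInv_unitInv]⟩
    rw [indicator_of_mem h, indicator_of_mem hmem, norm_unitInv,
      ← ENNReal.ofReal_mul (by positivity), Real.inv_rpow hz.le, sub_eq_neg_add,
      Real.rpow_add hz]
    congr 1
    field_simp
  · have hmem : unitInv ζ ∉ {y : E | y ≠ 0 ∧ unitInv y ∈ K} := fun h' => h (by
      have := h'.2; rwa [unitInv_unitInv] at this)
    rw [indicator_of_notMem h, indicator_of_notMem hmem, mul_zero]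

end Lintegral

theorem measurableSet_le_norm {E : Type*} [NormedAddCommGroup E] [MeasurableSpace E]
    [BorelSpace E] (ρ : ℝ) : MeasurableSet {y : E | ρ ≤ ‖y‖} :=
  measurableSet_le measurable_const measurable_norm

section Singular

variable {E : Type*} [NormedAddCommGroup E] [InnerProductSpace ℝ E] [FiniteDimensional ℝ E]
  [MeasurableSpace E] [BorelSpace E]

/-- Bounded functions are integrable against the singular kernel away from its pole. -/
theorem integrableOn_div_norm_rpow {q ρ M : ℝ} (hq : (Module.finrank ℝ E : ℝ) < q) (hρ : 0 < ρ)
    {g : E → ℝ} (hg : Measurable g) (hM : ∀ y, |g y| ≤ M) :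
    IntegrableOn (fun y => g y / ‖y‖ ^ q) {y : E | ρ ≤ ‖y‖} := by
  have hi : Integrable (fun y : E => M * (ρ / (1 + ρ)) ^ (-q) * (1 + ‖y‖) ^ (-q)) :=
    (integrable_one_add_norm hq).const_mul _
  refine hi.integrableOn.mono' (Measurable.aestronglyMeasurable (by fun_prop)) ?_
  filter_upwards [ae_restrict_mem (measurableSet_le_norm ρ)] with y hy
  have hy' : ρ ≤ ‖y‖ := hy
  have hq0 : 0 ≤ q := (Nat.cast_nonneg _).trans hq.le
  have h1 : ρ / (1 + ρ) * (1 + ‖y‖) ≤ ‖y‖ := by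
    rw [div_mul_eq_mul_div, div_le_iff₀ (by linarith)]
    nlinarith
  rw [norm_div, Real.norm_eq_abs, Real.norm_of_nonneg (by positivity), div_eq_mul_inv,
    ← Real.rpow_neg (norm_nonneg _), mul_assoc, ← Real.mul_rpow (by positivity) (by positivity)]
  refine mul_le_mul (hM y) ?_ (by positivity) ((abs_nonneg _).trans (hM y))
  exact Real.rpow_le_rpow_of_nonpos (by positivity) h1 (by linarith)

variable [Nontrivial E]

theorem lintegral_shell_le {s A B : ℝ} (hs : 0 < s) (hA : 0 < A) :
    ∫⁻ y in {y : E | A ≤ ‖y‖ ∧ ‖y‖ ≤ B},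
        ENNReal.ofReal (‖y‖ ^ (1 - ((Module.finrank ℝ E : ℝ) + 2 * s))) ≤
      ENNReal.ofReal (A ^ (-(2 * s)) * (B - A)) * (volume : Measure E).toSphere univ := by
  have hS : MeasurableSet {y : E | A ≤ ‖y‖ ∧ ‖y‖ ≤ B} :=
    (measurableSet_le measurable_const measurable_norm).inter
      (measurableSet_le measurable_norm measurable_const)
  have hd : 0 < Module.finrank ℝ E := Module.finrank_pos
  rw [← lintegral_indicator hS, lintegral_polar (Measurable.indicator (by fun_prop) hS)]
  refine (lintegral_mono fun θ : sphere (0 : E) 1 => ?_).trans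
    (lintegral_const (ENNReal.ofReal (A ^ (-(2 * s)) * (B - A)))).le
  have hθ : ‖(θ : E)‖ = 1 := norm_eq_of_mem_sphere θ
  calc ∫⁻ t in Ioi (0 : ℝ), ENNReal.ofReal (t ^ (Module.finrank ℝ E - 1)) *
        {y : E | A ≤ ‖y‖ ∧ ‖y‖ ≤ B}.indicator
          (fun y => ENNReal.ofReal (‖y‖ ^ (1 - ((Module.finrank ℝ E : ℝ) + 2 * s)))) (t • (θ : E))
      ≤ ∫⁻ t in Ioi (0 : ℝ), (Icc A B).indicator (fun _ => ENNReal.ofReal (A ^ (-(2 * s)))) t := by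
        refine setLIntegral_mono (Measurable.indicator (by fun_prop) measurableSet_Icc)
          fun t ht => ?_
        have ht' : 0 < t := ht
        have hn : ‖t • (θ : E)‖ = t := by rw [norm_smul, hθ, mul_one, Real.norm_of_nonneg ht'.le]
        by_cases h : t ∈ Icc A B
        · rw [indicator_of_mem h, indicator_of_mem (by rw [mem_ofPred_eq, hn]; exact h), hn,
            ← ENNReal.ofReal_mul (by positivity), ← Real.rpow_natCast, ← Real.rpow_add ht',
            Nat.cast_pred hd]
          refine ENNReal.ofReal_le_ofReal ?_
          rw [show (Module.finrank ℝ E : ℝ) - 1 + (1 - ((Module.finrank ℝ E : ℝ) + 2 * s)) =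
            -(2 * s) by ring]
          exact Real.rpow_le_rpow_of_nonpos hA h.1 (by linarith)
        · rw [indicator_of_notMem (s := {y : E | A ≤ ‖y‖ ∧ ‖y‖ ≤ B})
            (by rw [mem_ofPred_eq, hn]; exact h), mul_zero]
          exact zero_le
    _ ≤ ∫⁻ t, (Icc A B).indicator (fun _ => ENNReal.ofReal (A ^ (-(2 * s)))) t :=
        setLIntegral_le_lintegral _ _
    _ = ENNReal.ofReal (A ^ (-(2 * s)) * (B - A)) := by
        rw [lintegral_indicator_const measurableSet_Icc, Real.volume_Icc,
          ENNReal.ofReal_mul (by positivity)]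

theorem abs_setIntegral_sub_le {s A B ρ L : ℝ} (hs : 0 < s) (hA : 0 < A) (hAρ : A ≤ ρ)
    (hρB : ρ ≤ B) (hL : 0 ≤ L) {D : Set E} (hD : MeasurableSet D) (hBD : {y : E | B ≤ ‖y‖} ⊆ D)
    (hDA : D ⊆ {y : E | A ≤ ‖y‖}) {h : E → ℝ} (hh : IntegrableOn h {y : E | A ≤ ‖y‖})
    (hbd : ∀ y : E, A ≤ ‖y‖ → ‖y‖ ≤ B →
      |h y| ≤ L * ‖y‖ ^ (1 - ((Module.finrank ℝ E : ℝ) + 2 * s))) :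
    |(∫ y in {y : E | ρ ≤ ‖y‖}, h y) - ∫ y in D, h y| ≤
      L * (A ^ (-(2 * s)) * (B - A) * ((volume : Measure E).toSphere univ).toReal) := by
  set S := {y : E | A ≤ ‖y‖ ∧ ‖y‖ ≤ B} with hSdef
  have hS : MeasurableSet S :=
    (measurableSet_le measurable_const measurable_norm).inter
      (measurableSet_le measurable_norm measurable_const)
  have hρm := measurableSet_le_norm (E := E) ρ
  have hsub : {y : E | ρ ≤ ‖y‖} ⊆ {y : E | A ≤ ‖y‖} := fun y hy => hAρ.trans hy
  set k : E → ℝ := fun y => ‖y‖ ^ (1 - ((Module.finrank ℝ E : ℝ) + 2 * s)) with hk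
  have hkm : Measurable k := by fun_prop
  have hkS := lintegral_shell_le (E := E) (B := B) hs hA
  have hfin : ENNReal.ofReal (A ^ (-(2 * s)) * (B - A)) * (volume : Measure E).toSphere univ ≠ ∞ :=
    ENNReal.mul_ne_top ENNReal.ofReal_ne_top (measure_ne_top _ _)
  have hknn : 0 ≤ᵐ[volume.restrict S] k := ae_of_all _ fun y => by
    simp only [hk, Pi.zero_apply]; positivity
  have hki : IntegrableOn k S := by
    refine ⟨hkm.aestronglyMeasurable, ?_⟩
    rw [hasFiniteIntegral_iff_ofReal hknn]
    exact hkS.trans_lt hfin.lt_top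
  have hkv : ∫ y in S, k y ≤
      A ^ (-(2 * s)) * (B - A) * ((volume : Measure E).toSphere univ).toReal := by
    rw [integral_eq_lintegral_of_nonneg_ae hknn hkm.aestronglyMeasurable]
    refine (ENNReal.toReal_mono hfin hkS).trans_eq ?_
    rw [ENNReal.toReal_mul, ENNReal.toReal_ofReal
      (mul_nonneg (by positivity) (by linarith))]
  rw [← integral_indicator hρm, ← integral_indicator hD, ← integral_sub
    ((integrable_indicator_iff hρm).2 (hh.mono_set hsub))
    ((integrable_indicator_iff hD).2 (hh.mono_set hDA))]
  refine le_trans ?_ (mul_le_mul_of_nonneg_left hkv hL)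
  rw [← integral_const_mul, ← integral_indicator hS]
  rw [← Real.norm_eq_abs]
  refine norm_integral_le_of_norm_le ((integrable_indicator_iff hS).2 (hki.const_mul L))
    (ae_of_all _ fun y => ?_)
  by_cases hyS : y ∈ S
  · rw [indicator_of_mem hyS]
    refine le_trans ?_ (hbd y hyS.1 hyS.2)
    by_cases h1 : y ∈ {y : E | ρ ≤ ‖y‖} <;> by_cases h2 : y ∈ D <;> simp [h1, h2, abs_nonneg]
  · rw [indicator_of_notMem hyS]
    rw [hSdef, mem_ofPred_eq, not_and_or, not_le, not_le] at hyS
    rcases hyS with h1 | h1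
    · rw [indicator_of_notMem (fun h' => absurd (hsub h') (not_le.2 h1)),
        indicator_of_notMem (fun h' => absurd (hDA h') (not_le.2 h1))]
      simp
    · rw [indicator_of_mem (s := {y : E | ρ ≤ ‖y‖}) (hρB.trans h1.le),
        indicator_of_mem (hBD h1.le)]
      simp

end Singular

section PrincipalValue

variable {E : Type*} [NormedAddCommGroup E] [InnerProductSpace ℝ E] [FiniteDimensional ℝ E]
  [MeasurableSpace E] [BorelSpace E] [Nontrivial E]

/-- Integral over the image under inversion of the ball of radius `R` around `x / (1 - |x|²)`. -/
theorem setIntegral_ballProfile_sub {s R : ℝ} (hs : s ∈ Ioo (0 : ℝ) 1) {a x : E} (hx : ‖x‖ < 1)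
    (ha : 1 < ‖a‖) (hR : (1 - ‖x‖ ^ 2)⁻¹ ≤ R) (hRp : ‖(1 - ‖x‖ ^ 2)⁻¹ • x‖ < R) :
    |(∫ y in {y : E | y ≠ 0 ∧ unitInv y ∈ closedBall ((1 - ‖x‖ ^ 2)⁻¹ • x) R},
        (ballProfile s a x - ballProfile s a (x + y)) /
          ‖y‖ ^ ((Module.finrank ℝ E : ℝ) + 2 * s)) -
      ballProfile s a x * (((volume : Measure E).toSphere univ).toReal / 2 *
        poleDefect s ((‖a‖ ^ 2 - 1) / ((1 - ‖x‖ ^ 2) * ‖x - a‖ ^ 2))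
          (R ^ 2 - (1 - ‖x‖ ^ 2)⁻¹ ^ 2))| ≤
      ballProfile s a x * (((volume : Measure E).toSphere univ).toReal / 2 *
        (((R ^ 2 + ‖(1 - ‖x‖ ^ 2)⁻¹ • x‖ ^ 2) ^ s - (R ^ 2 - (1 - ‖x‖ ^ 2)⁻¹ ^ 2) ^ s) / s +
          |(R ^ 2 - ‖(1 - ‖x‖ ^ 2)⁻¹ • x‖ ^ 2) ^ s - (R ^ 2 - (1 - ‖x‖ ^ 2)⁻¹ ^ 2) ^ s| / s)) := by
  have hw : 0 < 1 - ‖x‖ ^ 2 := by nlinarith [norm_nonneg x]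
  have hax : a ≠ x := fun h => by subst h; linarith
  have hs0 := hs.1
  have hδr := sq_sub_norm_unitInv_sub_sq hx hax
  set r := (1 - ‖x‖ ^ 2)⁻¹ with hr
  set p := r • x with hp
  set δ := (‖a‖ ^ 2 - 1) / ((1 - ‖x‖ ^ 2) * ‖x - a‖ ^ 2) with hδdef
  set d := Module.finrank ℝ E with hd
  set σ := ((volume : Measure E).toSphere univ).toReal with hσ
  have hr0 : 0 < r := inv_pos.2 hw
  have hδ : 0 < δ := by
    have := norm_pos_iff.2 (sub_ne_zero.2 hax.symm)
    have : 0 < ‖a‖ ^ 2 - 1 := by nlinarith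
    positivity
  have hrR : 0 ≤ R ^ 2 - r ^ 2 := by nlinarith
  set D := {y : E | y ≠ 0 ∧ unitInv y ∈ closedBall p R} with hD
  have hDm : MeasurableSet D :=
    (measurableSet_singleton (0 : E)).compl.inter (measurable_unitInv measurableSet_closedBall)
  set U := ballProfile s a with hU
  have hUc : Continuous U := continuous_ballProfile hs0 ha
  have hUm : Measurable U := hUc.measurable
  have hUx : 0 ≤ U x := ballProfile_nonneg s a x
  have q1 : ∫⁻ y in D, ENNReal.ofReal (U x / ‖y‖ ^ ((d : ℝ) + 2 * s)) =
      ENNReal.ofReal (U x) * ∫⁻ ζ in closedBall p R, ENNReal.ofReal (‖ζ‖ ^ (2 * s - (d : ℝ))) := by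
    rw [setLIntegral_unitInv measurableSet_closedBall _ (fun _ => U x),
      ← lintegral_const_mul _ (by fun_prop)]
    refine lintegral_congr fun ζ => ?_
    rw [← ENNReal.ofReal_mul hUx]
    congr 3; ring
  have q2 : ∫⁻ y in D, ENNReal.ofReal (U (x + y) / ‖y‖ ^ ((d : ℝ) + 2 * s)) =
      ENNReal.ofReal (U x) * ∫⁻ ζ in closedBall p R, ENNReal.ofReal
        ((max (‖ζ - p‖ ^ 2 - r ^ 2) 0) ^ s * ‖ζ - unitInv (a - x)‖ ^ (-(d : ℝ))) := by
    rw [setLIntegral_unitInv measurableSet_closedBall _ (fun y => U (x + y)),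
      ← lintegral_const_mul _ (by fun_prop)]
    refine lintegral_congr_ae (ae_restrict_of_ae ?_)
    filter_upwards [compl_mem_ae_iff.2 (measure_singleton (0 : E))] with ζ hζ
    rw [← ENNReal.ofReal_mul hUx, ← ballProfile_add_unitInv hx hax hζ]
    congr 3; ring
  set Q1 := ∫⁻ ζ in closedBall p R, ENNReal.ofReal (‖ζ‖ ^ (2 * s - (d : ℝ))) with hQ1
  set Q2 := ∫⁻ ζ in closedBall p R, ENNReal.ofReal
        ((max (‖ζ - p‖ ^ 2 - r ^ 2) 0) ^ s * ‖ζ - unitInv (a - x)‖ ^ (-(d : ℝ))) with hQ2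
  have hσ' : (volume : Measure E).toSphere univ ≠ ∞ := measure_ne_top _ _
  have b1 := two_mul_lintegral_ball_rpow_le hs hRp
  have b2 := le_two_mul_lintegral_ball_rpow hs hRp
  have b3 := two_mul_lintegral_ball_pole (c := unitInv (a - x)) hs hδ hrR
    ((norm_nonneg _).trans hRp.le) hδr
  rw [← hd, ← hQ1] at b1 b2
  rw [← hd, ← hQ2] at b3
  have hQ1fin : Q1 ≠ ∞ := fun h => by
    rw [h] at b1
    exact ENNReal.mul_ne_top ENNReal.ofReal_ne_top hσ' (top_le_iff.1 (by simpa using b1))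
  have hQ2fin : Q2 ≠ ∞ := fun h => by
    rw [h] at b3
    exact ENNReal.mul_ne_top ENNReal.ofReal_ne_top hσ' (by rw [← b3]; simp)
  have hRp2 : 0 ≤ R ^ 2 - ‖p‖ ^ 2 := by nlinarith [norm_nonneg p]
  have c1 : 2 * Q1.toReal ≤ (R ^ 2 + ‖p‖ ^ 2) ^ s / s * σ := by
    have := ENNReal.toReal_mono (ENNReal.mul_ne_top ENNReal.ofReal_ne_top hσ') b1
    rwa [ENNReal.toReal_mul, ENNReal.toReal_mul, ENNReal.toReal_ofReal (by positivity)] at this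
  have c2 : (R ^ 2 - ‖p‖ ^ 2) ^ s / s * σ ≤ 2 * Q1.toReal := by
    have := ENNReal.toReal_mono (ENNReal.mul_ne_top (by simp) hQ1fin) b2
    rwa [ENNReal.toReal_mul, ENNReal.toReal_mul, ENNReal.toReal_ofReal (by positivity)] at this
  have hpd : 0 ≤ (R ^ 2 - r ^ 2) ^ s / s - poleDefect s δ (R ^ 2 - r ^ 2) :=
    rpow_div_sub_poleDefect_nonneg hs hδ hrR
  have c3 : 2 * Q2.toReal = ((R ^ 2 - r ^ 2) ^ s / s - poleDefect s δ (R ^ 2 - r ^ 2)) * σ := by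
    have := congrArg ENNReal.toReal b3
    rwa [ENNReal.toReal_mul, ENNReal.toReal_mul, ENNReal.toReal_ofReal hpd] at this
  have nn1 : ∀ y : E, 0 ≤ U x / ‖y‖ ^ ((d : ℝ) + 2 * s) := fun y => by positivity
  have nn2 : ∀ y : E, 0 ≤ U (x + y) / ‖y‖ ^ ((d : ℝ) + 2 * s) := fun y =>
    div_nonneg (ballProfile_nonneg _ _ _) (by positivity)
  have m1 : Measurable fun y : E => U x / ‖y‖ ^ ((d : ℝ) + 2 * s) := by fun_prop
  have m2 : Measurable fun y : E => U (x + y) / ‖y‖ ^ ((d : ℝ) + 2 * s) := by fun_prop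
  have i1 : IntegrableOn (fun y : E => U x / ‖y‖ ^ ((d : ℝ) + 2 * s)) D := by
    refine ⟨m1.aestronglyMeasurable, ?_⟩
    rw [hasFiniteIntegral_iff_ofReal (ae_of_all _ nn1), q1]
    exact ENNReal.mul_lt_top ENNReal.ofReal_lt_top hQ1fin.lt_top
  have i2 : IntegrableOn (fun y : E => U (x + y) / ‖y‖ ^ ((d : ℝ) + 2 * s)) D := by
    refine ⟨m2.aestronglyMeasurable, ?_⟩
    rw [hasFiniteIntegral_iff_ofReal (ae_of_all _ nn2), q2]
    exact ENNReal.mul_lt_top ENNReal.ofReal_lt_top hQ2fin.lt_top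
  have hval : ∫ y in D, (U x - U (x + y)) / ‖y‖ ^ ((d : ℝ) + 2 * s) =
      U x * (Q1.toReal - Q2.toReal) := by
    simp only [sub_div]
    rw [integral_sub i1 i2, integral_eq_lintegral_of_nonneg_ae (ae_of_all _ nn1)
      m1.aestronglyMeasurable, integral_eq_lintegral_of_nonneg_ae (ae_of_all _ nn2)
      m2.aestronglyMeasurable, q1, q2, ENNReal.toReal_mul, ENNReal.toReal_mul,
      ENNReal.toReal_ofReal hUx]
    ring
  rw [hval, ← mul_sub, abs_mul, abs_of_nonneg hUx]
  refine mul_le_mul_of_nonneg_left ?_ hUx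
  have hσ0 : 0 ≤ σ := ENNReal.toReal_nonneg
  have hX : 0 ≤ (R ^ 2 + ‖p‖ ^ 2) ^ s - (R ^ 2 - r ^ 2) ^ s :=
    sub_nonneg.2 (Real.rpow_le_rpow hrR (by nlinarith [norm_nonneg p]) hs0.le)
  have hQ2v : Q2.toReal = σ / 2 * ((R ^ 2 - r ^ 2) ^ s / s) -
      σ / 2 * poleDefect s δ (R ^ 2 - r ^ 2) := by linarith
  have hY := neg_abs_le ((R ^ 2 - ‖p‖ ^ 2) ^ s - (R ^ 2 - r ^ 2) ^ s)
  set X1 := (R ^ 2 + ‖p‖ ^ 2) ^ s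
  set X2 := (R ^ 2 - ‖p‖ ^ 2) ^ s
  set X0 := (R ^ 2 - r ^ 2) ^ s
  have hσ2 : 0 ≤ σ / 2 / s := by positivity
  have e1 := mul_nonneg hσ2 hX
  have e2 := mul_nonneg hσ2 (abs_nonneg (X2 - X0))
  have e3 := mul_le_mul_of_nonneg_left hY hσ2
  rw [hQ2v, abs_le]
  constructor
  · have : σ / 2 * ((X1 - X0) / s + |X2 - X0| / s) =
      σ / 2 / s * (X1 - X0) + σ / 2 / s * |X2 - X0| := by ring
    have : σ / 2 * (X0 / s) = σ / 2 / s * X0 := by ring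
    have : X2 / s * σ = 2 * (σ / 2 / s * X2) := by ring
    linarith
  · have : σ / 2 * ((X1 - X0) / s + |X2 - X0| / s) =
      σ / 2 / s * (X1 - X0) + σ / 2 / s * |X2 - X0| := by ring
    have : σ / 2 * (X0 / s) = σ / 2 / s * X0 := by ring
    have : X1 / s * σ = 2 * (σ / 2 / s * X1) := by ring
    linarith

end PrincipalValue

theorem tendsto_shell_bound {s : ℝ} (hs : s ∈ Ioo (0 : ℝ) 1) {P : ℝ} (hP : 0 ≤ P) :
    Tendsto (fun R : ℝ => (R + P)⁻¹ ^ (-(2 * s)) * ((R - P)⁻¹ - (R + P)⁻¹)) atTop (𝓝 0) := by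
  have hlim : Tendsto (fun R : ℝ => 6 * P * (R + P) ^ (-(2 - 2 * s))) atTop (𝓝 0) := by
    have := ((tendsto_rpow_neg_atTop (show 0 < 2 - 2 * s by linarith [hs.2])).comp
      (tendsto_atTop_add_const_right atTop P tendsto_id)).const_mul (6 * P)
    simpa using this
  refine squeeze_zero' ?_ ?_ hlim
  · filter_upwards [eventually_gt_atTop P] with R hR
    have h1 : 0 < R - P := by linarith
    have h2 : 0 < R + P := by linarith
    exact mul_nonneg (by positivity) (sub_nonneg.2 (inv_anti₀ h1 (by linarith)))
  · filter_upwards [eventually_gt_atTop (2 * P)] with R hR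
    have h1 : 0 < R - P := by linarith
    have h2 : 0 < R + P := by linarith
    have h3 : (R - P)⁻¹ - (R + P)⁻¹ ≤ 6 * P * ((R + P)⁻¹ * (R + P)⁻¹) := by
      have : (R - P)⁻¹ - (R + P)⁻¹ = 2 * P * ((R - P)⁻¹ * (R + P)⁻¹) := by
        field_simp; ring
      rw [this]
      have h4 : (R - P)⁻¹ ≤ 3 * (R + P)⁻¹ := by
        rw [← div_eq_mul_inv, inv_eq_one_div, div_le_div_iff₀ h1 h2]
        linarith
      have h5 : 0 < (R + P)⁻¹ := inv_pos.2 h2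
      have := mul_le_mul_of_nonneg_left h4 (show 0 ≤ 2 * P * (R + P)⁻¹ by positivity)
      linarith
    have h4 : (R + P)⁻¹ ^ (-(2 * s)) = (R + P) ^ (2 * s) := by
      rw [Real.inv_rpow h2.le, Real.rpow_neg h2.le, inv_inv]
    rw [h4]
    refine (mul_le_mul_of_nonneg_left h3 (by positivity)).trans_eq ?_
    rw [show -(2 - 2 * s) = 2 * s + (-1) + (-1) by ring, Real.rpow_add h2, Real.rpow_add h2,
      Real.rpow_neg_one]
    ring

section PrincipalValue

variable {E : Type*} [NormedAddCommGroup E] [InnerProductSpace ℝ E] [FiniteDimensional ℝ E]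
  [MeasurableSpace E] [BorelSpace E] [Nontrivial E]

theorem tendsto_setIntegral_ballProfile_sub {s : ℝ} (hs : s ∈ Ioo (0 : ℝ) 1) {a x : E}
    (hx : ‖x‖ < 1) (ha : 1 < ‖a‖) :
    Tendsto (fun R : ℝ =>
        ∫ y in {y : E | y ≠ 0 ∧ unitInv y ∈ closedBall ((1 - ‖x‖ ^ 2)⁻¹ • x) R},
          (ballProfile s a x - ballProfile s a (x + y)) /
            ‖y‖ ^ ((Module.finrank ℝ E : ℝ) + 2 * s)) atTop
      (𝓝 (ballProfile s a x * (((volume : Measure E).toSphere univ).toReal / 2 *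
        (((‖a‖ ^ 2 - 1) / ((1 - ‖x‖ ^ 2) * ‖x - a‖ ^ 2)) ^ s *
          (Real.Gamma s * Real.Gamma (1 - s)))))) := by
  have hw : 0 < 1 - ‖x‖ ^ 2 := by nlinarith [norm_nonneg x]
  have hax : a ≠ x := fun h => by subst h; linarith
  set δ := (‖a‖ ^ 2 - 1) / ((1 - ‖x‖ ^ 2) * ‖x - a‖ ^ 2) with hδdef
  have hδ : 0 < δ := by
    have := norm_pos_iff.2 (sub_ne_zero.2 hax.symm)
    have : 0 < ‖a‖ ^ 2 - 1 := by nlinarith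
    positivity
  set r := (1 - ‖x‖ ^ 2)⁻¹
  set p := r • x
  have hsq : Tendsto (fun R : ℝ => R ^ 2) atTop atTop := tendsto_pow_atTop two_ne_zero
  have hT : Tendsto (fun R : ℝ => R ^ 2 - r ^ 2) atTop atTop :=
    tendsto_atTop_add_const_right atTop (-r ^ 2) hsq
  have hJ := (((tendsto_poleDefect hs hδ).comp hT).const_mul
    (((volume : Measure E).toSphere univ).toReal / 2)).const_mul (ballProfile s a x)
  refine tendsto_of_tendsto_of_dist hJ ?_
  have hb1 := (((tendsto_add_rpow_sub_rpow hs (‖p‖ ^ 2) (-r ^ 2)).comp hsq).div_const s)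
  have hb2 := (((tendsto_add_rpow_sub_rpow hs (-‖p‖ ^ 2) (-r ^ 2)).comp hsq).abs.div_const s)
  have hb := ((hb1.add hb2).const_mul
    (((volume : Measure E).toSphere univ).toReal / 2)).const_mul (ballProfile s a x)
  simp only [zero_div, abs_zero, add_zero, mul_zero] at hb
  refine squeeze_zero' (Eventually.of_forall fun _ => dist_nonneg) ?_ hb
  filter_upwards [eventually_ge_atTop r, eventually_gt_atTop ‖p‖] with R hR hRp
  rw [dist_comm, Real.dist_eq]
  simp only [Function.comp_def, ← sub_eq_add_neg]
  exact setIntegral_ballProfile_sub hs hx ha hR hRp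

/-- The principal value integral of `ballProfile`. -/
theorem tendsto_pv_ballProfile {s : ℝ} (hs : s ∈ Ioo (0 : ℝ) 1) {a x : E}
    (hx : ‖x‖ < 1) (ha : 1 < ‖a‖) :
    Tendsto (fun ρ : ℝ => ∫ y in {y : E | ρ ≤ ‖y‖},
        (ballProfile s a x - ballProfile s a (x + y)) /
          ‖y‖ ^ ((Module.finrank ℝ E : ℝ) + 2 * s)) (𝓝[>] 0)
      (𝓝 (((volume : Measure E).toSphere univ).toReal / 2 *
        (Real.Gamma s * Real.Gamma (1 - s)) *
          ((‖a‖ ^ 2 - 1) ^ s * ‖x - a‖ ^ (-((Module.finrank ℝ E : ℝ) + 2 * s))))) := by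
  have hw : 0 < 1 - ‖x‖ ^ 2 := by nlinarith [norm_nonneg x]
  have hax : a ≠ x := fun h => by subst h; linarith
  have hxa : 0 < ‖x - a‖ := norm_pos_iff.2 (sub_ne_zero.2 hax.symm)
  have ha1 : 0 < ‖a‖ ^ 2 - 1 := by nlinarith
  have hs0 := hs.1
  have hmain := tendsto_setIntegral_ballProfile_sub hs hx ha
  have hconst : ballProfile s a x * (((volume : Measure E).toSphere univ).toReal / 2 *
        (((‖a‖ ^ 2 - 1) / ((1 - ‖x‖ ^ 2) * ‖x - a‖ ^ 2)) ^ s *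
          (Real.Gamma s * Real.Gamma (1 - s)))) =
      ((volume : Measure E).toSphere univ).toReal / 2 *
        (Real.Gamma s * Real.Gamma (1 - s)) *
          ((‖a‖ ^ 2 - 1) ^ s * ‖x - a‖ ^ (-((Module.finrank ℝ E : ℝ) + 2 * s))) := by
    rw [ballProfile_of_norm_lt hx, Real.div_rpow ha1.le (by positivity),
      Real.mul_rpow hw.le (by positivity), ← rpow_two_mul hxa.le, neg_add, Real.rpow_add hxa,
      Real.rpow_neg hxa.le (2 * s)]
    have h1 : (1 - ‖x‖ ^ 2) ^ s ≠ 0 := (Real.rpow_pos_of_pos hw _).ne'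
    have h2 : ‖x - a‖ ^ (2 * s) ≠ 0 := (Real.rpow_pos_of_pos hxa _).ne'
    field_simp
  rw [hconst] at hmain
  set p := (1 - ‖x‖ ^ 2)⁻¹ • x with hp
  set U := ballProfile s a with hU
  set d := Module.finrank ℝ E with hd
  have hUm : Measurable U := (continuous_ballProfile hs0 ha).measurable
  obtain ⟨M, hM⟩ : ∃ M, ∀ z, |U z| ≤ M := by
    refine ⟨(‖a‖ - 1) ^ (-(d : ℝ)), fun z => ?_⟩
    rw [abs_of_nonneg (ballProfile_nonneg _ _ _)]
    refine (ballProfile_le hs0 ha z).trans (mul_le_of_le_one_right ?_ ?_)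
    · exact Real.rpow_nonneg (by linarith) _
    · refine Real.rpow_le_one (le_max_right _ _) (max_le ?_ zero_le_one) hs0.le
      nlinarith [norm_nonneg z]
  obtain ⟨L, hL⟩ := (differentiableAt_ballProfile (s := s) hx ha).isBigO_sub.bound
  obtain ⟨η, hη, hLη⟩ := Metric.eventually_nhds_iff.1 hL
  have hI : ∀ A : ℝ, 0 < A → IntegrableOn
      (fun y : E => (U x - U (x + y)) / ‖y‖ ^ ((d : ℝ) + 2 * s)) {y | A ≤ ‖y‖} := fun A hA =>
    integrableOn_div_norm_rpow (M := M + M) (by linarith) hA (by fun_prop)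
      fun y => (abs_sub _ _).trans (add_le_add (hM _) (hM _))
  suffices h : Tendsto (fun R : ℝ => ∫ y in {y : E | R⁻¹ ≤ ‖y‖},
        (U x - U (x + y)) / ‖y‖ ^ ((d : ℝ) + 2 * s)) atTop
      (𝓝 (((volume : Measure E).toSphere univ).toReal / 2 *
        (Real.Gamma s * Real.Gamma (1 - s)) *
          ((‖a‖ ^ 2 - 1) ^ s * ‖x - a‖ ^ (-((d : ℝ) + 2 * s))))) by
    refine (h.comp tendsto_inv_nhdsGT_zero).congr fun ρ => ?_
    simp only [Function.comp, inv_inv]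
  refine tendsto_of_tendsto_of_dist hmain ?_
  have hb := ((tendsto_shell_bound hs (norm_nonneg p)).mul_const
    ((volume : Measure E).toSphere univ).toReal).const_mul |L|
  simp only [zero_mul, mul_zero] at hb
  refine squeeze_zero' (Eventually.of_forall fun _ => dist_nonneg) ?_ hb
  filter_upwards [eventually_gt_atTop ‖p‖, eventually_gt_atTop (‖p‖ + η⁻¹)] with R hR hRη
  have hR1 : 0 < R - ‖p‖ := by linarith
  have hp0 := norm_nonneg p
  have hR2 : 0 < R + ‖p‖ := by linarith
  have hR0 : 0 < R := by linarith
  rw [dist_comm, Real.dist_eq]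
  have hBη : (R - ‖p‖)⁻¹ < η := inv_lt_of_inv_lt₀ hη (by linarith)
  refine abs_setIntegral_sub_le hs0 (inv_pos.2 hR2) (inv_anti₀ hR0 (by linarith))
    (inv_anti₀ hR1 (by linarith)) (abs_nonneg L) ?_ ?_ ?_ (hI _ (inv_pos.2 hR2)) ?_
  · exact (measurableSet_singleton (0 : E)).compl.inter
      (measurable_unitInv measurableSet_closedBall)
  · intro y hy
    have hy' : (R - ‖p‖)⁻¹ ≤ ‖y‖ := hy
    have hy0 : 0 < ‖y‖ := (inv_pos.2 hR1).trans_le hy'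
    refine ⟨norm_pos_iff.1 hy0, ?_⟩
    rw [mem_closedBall, dist_eq_norm]
    have h1 := norm_sub_le (unitInv y) p
    rw [norm_unitInv] at h1
    have := inv_le_of_inv_le₀ hR1 hy'
    linarith
  · rintro y ⟨hy, hyD⟩
    have hy0 : 0 < ‖y‖ := norm_pos_iff.2 hy
    rw [mem_closedBall, dist_eq_norm] at hyD
    have h1 := norm_sub_norm_le (unitInv y) p
    rw [norm_unitInv] at h1
    exact inv_le_of_inv_le₀ hy0 (by linarith)
  · intro y hyA hyB
    have hy0 : 0 < ‖y‖ := (inv_pos.2 hR2).trans_le hyA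
    have h1 : |U (x + y) - U x| ≤ L * ‖y‖ := by
      have := hLη (y := x + y) (by rw [dist_eq_norm, add_sub_cancel_left]; linarith)
      rwa [add_sub_cancel_left, Real.norm_eq_abs] at this
    rw [abs_div, abs_of_pos (Real.rpow_pos_of_pos hy0 _), abs_sub_comm,
      Real.rpow_sub hy0, Real.rpow_one, ← mul_div_assoc]
    gcongr
    exact h1.trans (by gcongr; exact le_abs_self L)

end PrincipalValue

theorem lintegral_rpow_mul_add_rpow {a b r : ℝ} (ha : 0 < a) (hb : 0 < b) (hr : 0 < r) :
    ∫⁻ y in Ioi (0 : ℝ), ENNReal.ofReal (y ^ (a - 1) * (r ^ 2 + y) ^ (-(a + b))) =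
      ENNReal.ofReal (r ^ (-(2 * b)) * (Real.Gamma a * Real.Gamma b / Real.Gamma (a + b))) := by
  have hr2 : 0 < r ^ 2 := by positivity
  have himg : (fun y : ℝ => r ^ 2 * y) '' Ioi 0 = Ioi 0 := by
    rw [image_mul_left_Ioi hr2, mul_zero]
  have h := lintegral_image_eq_lintegral_abs_deriv_mul (s := Ioi (0 : ℝ))
    (f := fun y => r ^ 2 * y) (f' := fun _ => r ^ 2) measurableSet_Ioi
    (fun y _ => by simpa using ((hasDerivAt_id y).const_mul (r ^ 2)).hasDerivWithinAt)
    (fun y _ z _ h => mul_left_cancel₀ hr2.ne' h)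
    (fun y => ENNReal.ofReal (y ^ (a - 1) * (r ^ 2 + y) ^ (-(a + b))))
  rw [himg] at h
  rw [h, ENNReal.ofReal_mul (by positivity), ← lintegral_rpow_mul_one_add_rpow ha hb,
    ← lintegral_const_mul _ (by fun_prop)]
  refine setLIntegral_congr_fun measurableSet_Ioi fun y hy => ?_
  have hy0 : 0 < y := hy
  rw [← ENNReal.ofReal_mul (by positivity), ← ENNReal.ofReal_mul (by positivity),
    abs_of_pos hr2, Real.mul_rpow hr2.le hy0.le,
    show r ^ 2 + r ^ 2 * y = r ^ 2 * (1 + y) by ring, Real.mul_rpow hr2.le (by positivity)]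
  congr 1
  have h1 : r ^ (-(2 * b)) = r ^ 2 * (r ^ 2) ^ (a - 1) * (r ^ 2) ^ (-(a + b)) := by
    rw [← Real.rpow_one_add' hr2.le (by linarith), ← Real.rpow_add hr2, ← rpow_two_mul hr.le]
    congr 1; ring
  rw [h1]; ring

section PoissonIntegral

variable {E : Type*} [NormedAddCommGroup E] [InnerProductSpace ℝ E]

theorem unitInv_smul {c : ℝ} (x : E) : unitInv (c • x) = c⁻¹ • unitInv x := by
  rcases eq_or_ne c 0 with rfl | hc
  · simp [unitInv]
  · rw [unitInv, unitInv, smul_smul, smul_smul, norm_smul, mul_pow, Real.norm_eq_abs, sq_abs]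
    congr 1
    field_simp

variable [FiniteDimensional ℝ E] [MeasurableSpace E] [BorelSpace E] [Nontrivial E]

/-- The integral of `|z - a| ^ (-d - 2 * s)` against the boundary kernel at `e`. -/
theorem two_mul_lintegral_ballProfile_mul {s : ℝ} (hs : 0 < s) {a e : E} (ha : 1 < ‖a‖)
    (he : ‖e‖ = 1) :
    2 * ∫⁻ z, ENNReal.ofReal (ballProfile s e z *
        ‖z - a‖ ^ (-((Module.finrank ℝ E : ℝ) + 2 * s))) =
      ENNReal.ofReal ((‖a‖ ^ 2 - 1) ^ (-s) * ‖e - a‖ ^ (-(Module.finrank ℝ E : ℝ)) *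
        (Real.Gamma s * Real.Gamma ((Module.finrank ℝ E : ℝ) / 2) /
          Real.Gamma (s + (Module.finrank ℝ E : ℝ) / 2))) *
        (volume : Measure E).toSphere univ := by
  have ha0 : 0 < ‖a‖ := by linarith
  have hx : ‖unitInv a‖ < 1 := by
    rw [norm_unitInv]; exact inv_lt_one_of_one_lt₀ ha
  have hxn : ‖unitInv a‖ = ‖a‖⁻¹ := norm_unitInv a
  set x := unitInv a with hxdef
  have hax : a ≠ x := fun h => by rw [← h] at hx; linarith
  have hex : e ≠ x := fun h => by rw [← h] at hx; linarith
  have hw : 0 < 1 - ‖x‖ ^ 2 := by nlinarith [norm_nonneg x]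
  have hwx : a - x = (1 - ‖x‖ ^ 2) • a := by
    rw [hxn, sub_smul, one_smul, hxdef, unitInv, inv_pow]
  have hpa : unitInv (a - x) = (1 - ‖x‖ ^ 2)⁻¹ • x := by rw [hwx, unitInv_smul]
  have hxa : ‖x - a‖ = (1 - ‖x‖ ^ 2) * ‖a‖ := by
    rw [norm_sub_rev, hwx, norm_smul, Real.norm_of_nonneg hw.le]
  have hxe : ‖x - e‖ = ‖e - a‖ / ‖a‖ := by
    have h := EuclideanGeometry.dist_inversion_inversion (c := (0 : E)) (x := a) (y := e)
      (norm_pos_iff.1 ha0) (by rw [← norm_pos_iff, he]; exact one_pos) 1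
    have hee : unitInv e = e := by simp [unitInv, he]
    rw [← unitInv_eq_inversion, hee, dist_eq_norm, dist_zero_right, dist_zero_right, he,
      dist_eq_norm, norm_sub_rev a e] at h
    rw [h]; ring
  have hrad := sq_sub_norm_unitInv_sub_sq hx hex
  rw [he, one_pow, sub_self, zero_div, sub_eq_zero] at hrad
  set w := 1 - ‖x‖ ^ 2 with hwdef
  set p := w⁻¹ • x with hp
  set d := Module.finrank ℝ E with hd
  have hdpos : 0 < d := Module.finrank_pos
  have hUx : 0 ≤ ballProfile s e x := ballProfile_nonneg _ _ _
  set F : ℝ → ℝ≥0∞ := fun v =>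
    ENNReal.ofReal ((max (v - w⁻¹ ^ 2) 0) ^ s * v ^ (-(s + (d : ℝ) / 2))) with hF
  have hFm : Measurable F := by fun_prop
  have hcov : ∫⁻ z, ENNReal.ofReal (ballProfile s e z * ‖z - a‖ ^ (-((d : ℝ) + 2 * s))) =
      ENNReal.ofReal (ballProfile s e x * ‖x - a‖ ^ (-((d : ℝ) + 2 * s))) *
        ∫⁻ ζ, F (‖ζ - p‖ ^ 2) * ENNReal.ofReal (‖ζ - unitInv (e - x)‖ ^ (-(d : ℝ))) := by
    rw [← lintegral_add_left_eq_self _ x, lintegral_unitInv, ← lintegral_const_mul _ (by fun_prop)]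
    refine lintegral_congr_ae ?_
    filter_upwards [compl_mem_ae_iff.2 (measure_singleton (0 : E))] with ζ hζ
    have hz : 0 < ‖ζ‖ := norm_pos_iff.2 hζ
    have h1 := ballProfile_add_unitInv (s := s) hx hex hζ
    have h2 := norm_add_unitInv_sub hax hζ
    rw [hpa] at h2
    rw [← hwdef, ← hp, ← hd] at h1
    rw [hF, ← ENNReal.ofReal_mul (by positivity), ← ENNReal.ofReal_mul (by positivity),
      ← ENNReal.ofReal_mul (by positivity), h2, Real.div_rpow (by positivity) hz.le,
      Real.mul_rpow (norm_nonneg _) (norm_nonneg _)]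
    congr 1
    have h3 : (‖ζ - p‖ ^ 2) ^ (-(s + (d : ℝ) / 2)) = ‖ζ - p‖ ^ (-((d : ℝ) + 2 * s)) := by
      rw [← rpow_two_mul (norm_nonneg _)]; congr 1; ring
    have h4 : ‖ζ‖ ^ (-(2 * (d : ℝ))) / ‖ζ‖ ^ (-((d : ℝ) + 2 * s)) = ‖ζ‖ ^ (2 * s - (d : ℝ)) := by
      rw [← Real.rpow_sub hz]; congr 1; ring
    rw [h3]
    calc _ = (ballProfile s e (x + unitInv ζ) *
          (‖ζ‖ ^ (-(2 * (d : ℝ))) / ‖ζ‖ ^ (-((d : ℝ) + 2 * s)))) *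
          (‖x - a‖ ^ (-((d : ℝ) + 2 * s)) * ‖ζ - p‖ ^ (-((d : ℝ) + 2 * s))) := by ring
      _ = _ := by rw [h4, h1]; ring
  have hker := two_mul_lintegral_radial_mul_pole p (unitInv (e - x)) hFm (fun v hv => by
    have : max (v - w⁻¹ ^ 2) 0 = 0 := max_eq_right (by linarith)
    simp only [hF, this, Real.zero_rpow hs.ne', zero_mul, ENNReal.ofReal_zero])
  have hbeta : ∫⁻ y in Ioi (0 : ℝ), ENNReal.ofReal (1 / y) *
        F (‖unitInv (e - x) - p‖ ^ 2 + y) =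
      ENNReal.ofReal (w⁻¹ ^ (-(2 * ((d : ℝ) / 2))) *
        (Real.Gamma s * Real.Gamma ((d : ℝ) / 2) / Real.Gamma (s + (d : ℝ) / 2))) := by
    rw [← lintegral_rpow_mul_add_rpow hs (by positivity) (inv_pos.2 hw)]
    refine setLIntegral_congr_fun measurableSet_Ioi fun y hy => ?_
    have hy0 : 0 < y := hy
    rw [hF, ← hrad]
    simp only
    rw [add_sub_cancel_left, max_eq_left hy0.le, ← ENNReal.ofReal_mul (by positivity),
      Real.rpow_sub_one hy0.ne']
    congr 1; ring
  rw [hcov, mul_left_comm, hker, hbeta, ← mul_assoc, ← ENNReal.ofReal_mul (by positivity)]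
  congr 2
  rw [← mul_assoc]
  congr 1
  have ha1 : ‖a‖ ^ 2 - 1 = w * ‖a‖ ^ 2 := by rw [hwdef, hxn]; field_simp
  have hmul : 2 * ((d : ℝ) / 2) = d := by ring
  have k1 : (w * ‖a‖ ^ 2) ^ (-s) = w ^ (-s) * ‖a‖ ^ (2 * -s) := by
    rw [Real.mul_rpow hw.le (by positivity), ← rpow_two_mul ha0.le]
  have k2 : w ^ (-((d : ℝ) + 2 * s)) = w ^ (-(d : ℝ)) * (w ^ (-s) / w ^ s) := by
    rw [← Real.rpow_sub hw, ← Real.rpow_add hw]; congr 1; ring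
  have k3 : ‖a‖ ^ (-((d : ℝ) + 2 * s)) = ‖a‖ ^ (-(d : ℝ)) * ‖a‖ ^ (2 * -s) := by
    rw [← Real.rpow_add ha0]; congr 1; ring
  rw [ballProfile_of_norm_lt hx, ha1, hxa, hxe, ← hwdef, ← hd, hmul, k1,
    Real.mul_rpow hw.le ha0.le, k2, k3, Real.div_rpow (norm_nonneg _) ha0.le, Real.inv_rpow hw.le]
  have h1 : w ^ (-(d : ℝ)) ≠ 0 := (Real.rpow_pos_of_pos hw _).ne'
  have h2 : w ^ s ≠ 0 := (Real.rpow_pos_of_pos hw _).ne'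
  have h3 : ‖a‖ ^ (-(d : ℝ)) ≠ 0 := (Real.rpow_pos_of_pos ha0 _).ne'
  field_simp

end PoissonIntegral

section BoundaryProfile

variable {E : Type*} [NormedAddCommGroup E] [InnerProductSpace ℝ E]
  [MeasurableSpace E] [BorelSpace E]

theorem measurable_ballProfile (s : ℝ) (a : E) : Measurable (ballProfile s a) := by
  unfold ballProfile
  fun_prop

variable [FiniteDimensional ℝ E] [Nontrivial E]

theorem lintegral_ballProfile_mul {s : ℝ} (hs : 0 < s) {a e : E} (ha : 1 < ‖a‖) (he : ‖e‖ = 1) :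
    ∫⁻ z, ENNReal.ofReal (ballProfile s e z * ‖z - a‖ ^ (-((Module.finrank ℝ E : ℝ) + 2 * s))) =
      ENNReal.ofReal (((volume : Measure E).toSphere univ).toReal / 2 *
        ((‖a‖ ^ 2 - 1) ^ (-s) * ‖e - a‖ ^ (-(Module.finrank ℝ E : ℝ)) *
        (Real.Gamma s * Real.Gamma ((Module.finrank ℝ E : ℝ) / 2) /
          Real.Gamma (s + (Module.finrank ℝ E : ℝ) / 2)))) := by
  have h := two_mul_lintegral_ballProfile_mul hs ha he
  set I := ∫⁻ z, ENNReal.ofReal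
    (ballProfile s e z * ‖z - a‖ ^ (-((Module.finrank ℝ E : ℝ) + 2 * s)))
  have hI : I = 2⁻¹ * (2 * I) := by
    rw [← mul_assoc, ENNReal.inv_mul_cancel (by simp) (by simp), one_mul]
  have hσ : (volume : Measure E).toSphere univ =
      ENNReal.ofReal ((volume : Measure E).toSphere univ).toReal :=
    (ENNReal.ofReal_toReal (measure_ne_top _ _)).symm
  have h2 : (2⁻¹ : ℝ≥0∞) = ENNReal.ofReal 2⁻¹ := by
    rw [ENNReal.ofReal_inv_of_pos two_pos]; simp
  rw [hI, h, hσ, ENNReal.toReal_ofReal ENNReal.toReal_nonneg, mul_comm (ENNReal.ofReal _),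
    ← mul_assoc, h2, ← ENNReal.ofReal_mul (by norm_num), ← ENNReal.ofReal_mul (by positivity)]
  congr 1
  ring

theorem integrable_ballProfile_mul {s : ℝ} (hs : 0 < s) {a e : E} (ha : 1 < ‖a‖)
    (he : ‖e‖ = 1) :
    Integrable fun z => ballProfile s e z * ‖z - a‖ ^ (-((Module.finrank ℝ E : ℝ) + 2 * s)) := by
  refine ⟨((measurable_ballProfile s e).mul (by fun_prop)).aestronglyMeasurable, ?_⟩
  rw [hasFiniteIntegral_iff_ofReal
    (.of_forall fun z => mul_nonneg (ballProfile_nonneg s e z) (by positivity)),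
    lintegral_ballProfile_mul hs ha he]
  exact ENNReal.ofReal_lt_top

theorem integral_ballProfile_mul {s : ℝ} (hs : 0 < s) {a e : E} (ha : 1 < ‖a‖)
    (he : ‖e‖ = 1) :
    ∫ z, ballProfile s e z * ‖z - a‖ ^ (-((Module.finrank ℝ E : ℝ) + 2 * s)) =
      ((volume : Measure E).toSphere univ).toReal / 2 *
        ((‖a‖ ^ 2 - 1) ^ (-s) * ‖e - a‖ ^ (-(Module.finrank ℝ E : ℝ)) *
        (Real.Gamma s * Real.Gamma ((Module.finrank ℝ E : ℝ) / 2) /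
          Real.Gamma (s + (Module.finrank ℝ E : ℝ) / 2))) := by
  rw [integral_eq_lintegral_of_nonneg_ae
    (.of_forall fun z => mul_nonneg (ballProfile_nonneg s e z) (by positivity))
    ((measurable_ballProfile s e).mul (by fun_prop)).aestronglyMeasurable,
    lintegral_ballProfile_mul hs ha he, ENNReal.toReal_ofReal]
  have hd : (0 : ℝ) < Module.finrank ℝ E := by exact_mod_cast Module.finrank_pos
  have h1 := Real.Gamma_pos_of_pos hs
  have h2 := Real.Gamma_pos_of_pos (half_pos hd)
  have h3 := Real.Gamma_pos_of_pos (add_pos hs (half_pos hd))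
  have h4 : 0 ≤ ‖a‖ ^ 2 - 1 := by nlinarith
  positivity

theorem integrable_ballProfile {s : ℝ} (hs : 0 < s) {e : E} (he : ‖e‖ = 1) :
    Integrable (ballProfile s e) := by
  obtain ⟨a, ha⟩ := exists_norm_eq E (zero_le_two (α := ℝ))
  have hq : (0 : ℝ) ≤ (Module.finrank ℝ E : ℝ) + 2 * s := by positivity
  refine ((integrable_ballProfile_mul hs (a := a) (by rw [ha]; norm_num) he).const_mul
    ((3 : ℝ) ^ ((Module.finrank ℝ E : ℝ) + 2 * s))).mono'
    (measurable_ballProfile s e).aestronglyMeasurable (.of_forall fun z => ?_)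
  rw [Real.norm_of_nonneg (ballProfile_nonneg s e z)]
  rcases le_or_gt 1 ‖z‖ with hz | hz
  · simp [ballProfile_eq_zero hs e hz]
  · have h1 : ‖z - a‖ ≤ 3 := (norm_sub_le _ _).trans (by rw [ha]; linarith)
    have h2 : 0 < ‖z - a‖ := by
      have := norm_sub_norm_le a z
      rw [norm_sub_rev] at this
      linarith
    have h3 : 1 ≤ (3 : ℝ) ^ ((Module.finrank ℝ E : ℝ) + 2 * s) *
        ‖z - a‖ ^ (-((Module.finrank ℝ E : ℝ) + 2 * s)) := by
      rw [Real.rpow_neg h2.le, ← div_eq_mul_inv, one_le_div (by positivity)]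
      gcongr
    calc ballProfile s e z = ballProfile s e z * 1 := (mul_one _).symm
      _ ≤ ballProfile s e z * _ := mul_le_mul_of_nonneg_left h3 (ballProfile_nonneg s e z)
      _ = _ := by ring

end BoundaryProfile

section Constants

theorem toSphere_euclideanSpace {n : ℕ} (hn : 1 ≤ n) :
    ((volume : Measure (EuclideanSpace ℝ (Fin n))).toSphere univ).toReal / 2 =
      Real.pi ^ ((n : ℝ) / 2) / Real.Gamma ((n : ℝ) / 2) := by
  have : Nonempty (Fin n) := ⟨⟨0, hn⟩⟩
  have hn0 : (0 : ℝ) < n := by exact_mod_cast hn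
  have hG := Real.Gamma_pos_of_pos (half_pos hn0)
  rw [Measure.toSphere_apply_univ, EuclideanSpace.volume_ball, finrank_euclideanSpace_fin,
    Fintype.card_fin, Real.Gamma_add_one (half_pos hn0).ne', Real.sqrt_eq_rpow,
    ← Real.rpow_natCast, ← Real.rpow_mul Real.pi_pos.le]
  simp only [ENNReal.ofReal_one, one_pow, one_mul, ENNReal.toReal_mul, ENNReal.toReal_natCast]
  rw [ENNReal.toReal_ofReal (by positivity), show (1 / 2 : ℝ) * n = n / 2 by ring]
  field_simp

theorem fracC_pos (n : ℕ) {s : ℝ} (hs : s ∈ Ioo (0 : ℝ) 1) : 0 < fracC n s := by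
  have h1 := Real.Gamma_pos_of_pos (sub_pos.2 hs.2)
  have h2 := Real.Gamma_pos_of_pos (show 0 < (n : ℝ) / 2 + s by have := hs.1; positivity)
  have := hs.1
  have := Real.pi_pos
  unfold fracC
  positivity

/-- The factor by which `(-Δ)^s` scales the profile attached to a pole. -/
noncomputable def profileC (n : ℕ) (s : ℝ) : ℝ :=
  fracC n s * (Real.pi ^ ((n : ℝ) / 2) / Real.Gamma ((n : ℝ) / 2) *
    (Real.Gamma s * Real.Gamma (1 - s)))

theorem profileC_pos {n : ℕ} (hn : 1 ≤ n) {s : ℝ} (hs : s ∈ Ioo (0 : ℝ) 1) :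
    0 < profileC n s := by
  have hn0 : (0 : ℝ) < n := by exact_mod_cast hn
  have h0 := fracC_pos n hs
  have h1 := Real.Gamma_pos_of_pos (sub_pos.2 hs.2)
  have h2 := Real.Gamma_pos_of_pos hs.1
  have h3 := Real.Gamma_pos_of_pos (half_pos hn0)
  have := Real.pi_pos
  unfold profileC
  positivity

theorem kappaC_mul_profileC {n : ℕ} (hn : 1 ≤ n) {s : ℝ} (hs : s ∈ Ioo (0 : ℝ) 1) :
    kappaC n s / s * (Real.pi ^ ((n : ℝ) / 2) / Real.Gamma ((n : ℝ) / 2) *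
      (Real.Gamma s * Real.Gamma ((n : ℝ) / 2) / Real.Gamma (s + (n : ℝ) / 2))) =
      (profileC n s)⁻¹ := by
  have hn0 : (0 : ℝ) < n := by exact_mod_cast hn
  have hs0 := hs.1
  have h1 := Real.Gamma_pos_of_pos (sub_pos.2 hs.2)
  have h2 := Real.Gamma_pos_of_pos hs.1
  have h3 := Real.Gamma_pos_of_pos (half_pos hn0)
  have h4 := Real.Gamma_pos_of_pos (add_pos hs.1 (half_pos hn0))
  have hpi := Real.rpow_pos_of_pos Real.pi_pos ((n : ℝ) / 2)
  have h5 : (0 : ℝ) < 4 ^ s := by positivity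
  unfold profileC kappaC fracC
  rw [add_comm ((n : ℝ) / 2) s]
  field_simp

variable {n : ℕ} {s : ℝ}

theorem hasFracLap_ballProfile (hn : 1 ≤ n) (hs : s ∈ Ioo (0 : ℝ) 1)
    {a x : EuclideanSpace ℝ (Fin n)} (hx : ‖x‖ < 1) (ha : 1 < ‖a‖) :
    HasFracLap n s (ballProfile s a) x
      (profileC n s * ((‖a‖ ^ 2 - 1) ^ s * ‖x - a‖ ^ (-((n : ℝ) + 2 * s)))) := by
  have : Nonempty (Fin n) := ⟨⟨0, hn⟩⟩
  have h := (tendsto_pv_ballProfile hs hx ha).const_mul (fracC n s)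
  rw [toSphere_euclideanSpace hn, finrank_euclideanSpace_fin] at h
  simpa only [HasFracLap, profileC, mul_assoc] using h

theorem kappaC_mul_integral_ballProfile_mul (hn : 1 ≤ n) (hs : s ∈ Ioo (0 : ℝ) 1)
    {a e : EuclideanSpace ℝ (Fin n)} (ha : 1 < ‖a‖) (he : ‖e‖ = 1) :
    kappaC n s / s * ∫ z, ballProfile s e z * ‖z - a‖ ^ (-((n : ℝ) + 2 * s)) =
      (profileC n s * (‖a‖ ^ 2 - 1) ^ s)⁻¹ * ‖e - a‖ ^ (-(n : ℝ)) := by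
  have : Nonempty (Fin n) := ⟨⟨0, hn⟩⟩
  have h := integral_ballProfile_mul hs.1 ha he
  rw [toSphere_euclideanSpace hn, finrank_euclideanSpace_fin] at h
  rw [h, mul_inv, ← kappaC_mul_profileC hn hs,
    Real.rpow_neg (show 0 ≤ ‖a‖ ^ 2 - 1 by nlinarith)]
  ring

end Constants

section FracLap

variable {n : ℕ} {s : ℝ} {x : EuclideanSpace ℝ (Fin n)}
  {u v : EuclideanSpace ℝ (Fin n) → ℝ} {L L' : ℝ}

theorem exists_abs_le_of_eq_zero_off_ball (hu : Continuous u)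
    (hu0 : ∀ x ∉ ball (0 : EuclideanSpace ℝ (Fin n)) 1, u x = 0) : ∃ M, ∀ x, |u x| ≤ M := by
  obtain ⟨M, hM⟩ := (isCompact_closedBall (0 : EuclideanSpace ℝ (Fin n))
    1).exists_bound_of_continuousOn hu.continuousOn
  refine ⟨max M 0, fun x => ?_⟩
  by_cases hx : x ∈ ball (0 : EuclideanSpace ℝ (Fin n)) 1
  · exact (hM x (ball_subset_closedBall hx)).trans (le_max_left _ _)
  · simp [hu0 x hx]

theorem integrableOn_sub_div_norm_rpow (hs : 0 < s) (hu : Continuous u) {M : ℝ}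
    (hM : ∀ x, |u x| ≤ M) (x : EuclideanSpace ℝ (Fin n)) {ρ : ℝ} (hρ : 0 < ρ) :
    IntegrableOn (fun y => (u x - u (x + y)) / ‖y‖ ^ ((n : ℝ) + 2 * s)) {y | ρ ≤ ‖y‖} := by
  refine integrableOn_div_norm_rpow (M := M + M) ?_ hρ (by fun_prop) fun y => ?_
  · rw [finrank_euclideanSpace_fin]; linarith
  · exact (abs_sub _ _).trans (add_le_add (hM _) (hM _))

theorem HasFracLap.add (hs : 0 < s) (hu : Continuous u) (hub : ∃ M, ∀ x, |u x| ≤ M)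
    (hv : Continuous v) (hvb : ∃ M, ∀ x, |v x| ≤ M)
    (hL : HasFracLap n s u x L) (hL' : HasFracLap n s v x L') :
    HasFracLap n s (fun x => u x + v x) x (L + L') := by
  obtain ⟨M, hM⟩ := hub
  obtain ⟨M', hM'⟩ := hvb
  refine (Tendsto.add hL hL').congr' ?_
  filter_upwards [self_mem_nhdsWithin] with ρ hρ
  rw [← mul_add, ← integral_add (integrableOn_sub_div_norm_rpow hs hu hM x hρ)
    (integrableOn_sub_div_norm_rpow hs hv hM' x hρ)]
  congr 1
  refine integral_congr_ae (.of_forall fun y => ?_)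
  simp only
  ring

theorem HasFracLap.const_mul (c : ℝ) (hL : HasFracLap n s u x L) :
    HasFracLap n s (fun x => c * u x) x (c * L) := by
  refine (Tendsto.const_mul c hL).congr fun ρ => ?_
  rw [mul_left_comm, ← integral_const_mul]
  congr 1
  refine integral_congr_ae (.of_forall fun y => ?_)
  simp only
  ring

theorem HasFracLap.nonneg_of_forall_le (hs : s ∈ Ioo (0 : ℝ) 1) (hx : ∀ y, u y ≤ u x)
    (hL : HasFracLap n s u x L) : 0 ≤ L := by
  refine ge_of_tendsto' hL fun ρ => mul_nonneg (fracC_pos n hs).le ?_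
  exact integral_nonneg fun y => div_nonneg (sub_nonneg.2 (hx _)) (by positivity)

theorem nonpos_of_hasFracLap_neg (hs : s ∈ Ioo (0 : ℝ) 1) (hu : Continuous u)
    (hu0 : ∀ x ∉ ball (0 : EuclideanSpace ℝ (Fin n)) 1, u x = 0)
    (hL : ∀ x ∈ ball (0 : EuclideanSpace ℝ (Fin n)) 1, ∃ L < 0, HasFracLap n s u x L)
    (x : EuclideanSpace ℝ (Fin n)) : u x ≤ 0 := by
  by_contra! hpos
  have hmem : ∀ y, 0 < u y → y ∈ ball (0 : EuclideanSpace ℝ (Fin n)) 1 := fun y hy => by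
    by_contra h
    exact hy.ne' (hu0 y h)
  obtain ⟨z, -, hz⟩ := (isCompact_closedBall (0 : EuclideanSpace ℝ (Fin n)) 1).exists_isMaxOn
    ⟨x, ball_subset_closedBall (hmem x hpos)⟩ hu.continuousOn
  have hzx : u x ≤ u z := hz (ball_subset_closedBall (hmem x hpos))
  have hzy : ∀ y, u y ≤ u z := fun y => by
    rcases le_or_gt (u y) 0 with hy | hy
    · linarith
    · exact hz (ball_subset_closedBall (hmem y hy))
  obtain ⟨L, hL0, hL⟩ := hL z (hmem z (by linarith))
  exact hL0.not_ge (hL.nonneg_of_forall_le hs hzy)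

theorem exists_boundary_bound (hn : 1 ≤ n) (hs : s ∈ Ioo (0 : ℝ) 1) :
    ∃ C > 0, ∀ (u g : EuclideanSpace ℝ (Fin n) → ℝ) (η : ℝ), 0 < η → Continuous u →
      (∀ x ∉ ball (0 : EuclideanSpace ℝ (Fin n)) 1, u x = 0) →
      (∀ x ∈ ball (0 : EuclideanSpace ℝ (Fin n)) 1, HasFracLap n s u x (g x)) →
      (∀ x ∈ ball (0 : EuclideanSpace ℝ (Fin n)) 1, |g x| ≤ η) →
      ∀ x, |u x| ≤ C * η * (max (1 - ‖x‖ ^ 2) 0) ^ s := by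
  have : Nonempty (Fin n) := ⟨⟨0, hn⟩⟩
  have hs0 := hs.1
  obtain ⟨a, ha⟩ := exists_norm_eq (EuclideanSpace ℝ (Fin n)) (zero_le_two (α := ℝ))
  have ha1 : 1 < ‖a‖ := by rw [ha]; norm_num
  set A := profileC n s * ((‖a‖ ^ 2 - 1) ^ s * (3 : ℝ) ^ (-((n : ℝ) + 2 * s))) with hA
  have hP := profileC_pos hn hs
  have ha2 : 0 < ‖a‖ ^ 2 - 1 := by nlinarith
  have hA0 : 0 < A := by positivity
  have hbar0 : ∀ x ∉ ball (0 : EuclideanSpace ℝ (Fin n)) 1, ballProfile s a x = 0 := fun x hx =>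
    ballProfile_eq_zero hs0 a (by simpa using hx)
  have hone : ∀ (u g : EuclideanSpace ℝ (Fin n) → ℝ) (η : ℝ), 0 < η → Continuous u →
      (∀ x ∉ ball (0 : EuclideanSpace ℝ (Fin n)) 1, u x = 0) →
      (∀ x ∈ ball (0 : EuclideanSpace ℝ (Fin n)) 1, HasFracLap n s u x (g x)) →
      (∀ x ∈ ball (0 : EuclideanSpace ℝ (Fin n)) 1, |g x| ≤ η) →
      ∀ x, u x ≤ 2 * A⁻¹ * η * ballProfile s a x := by
    intro u g η hη hu hu0 hL hg x
    have hb := continuous_ballProfile hs0 ha1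
    have := nonpos_of_hasFracLap_neg (u := fun x => u x + -(2 * A⁻¹ * η) * ballProfile s a x) hs
      (by fun_prop) (fun x hx => by simp [hu0 x hx, hbar0 x hx]) (fun x hx => ?_) x
    · linarith
    have hx1 : ‖x‖ < 1 := by simpa using hx
    refine ⟨_, ?_, (hL x hx).add hs0 hu (exists_abs_le_of_eq_zero_off_ball hu hu0)
      (by fun_prop) (exists_abs_le_of_eq_zero_off_ball (by fun_prop)
        (fun x hx => by simp [hbar0 x hx]))
      ((hasFracLap_ballProfile hn hs hx1 ha1).const_mul _)⟩
    have hlow : A ≤ profileC n s * ((‖a‖ ^ 2 - 1) ^ s * ‖x - a‖ ^ (-((n : ℝ) + 2 * s))) := by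
      have h1 : ‖x - a‖ ≤ 3 := (norm_sub_le _ _).trans (by rw [ha]; linarith)
      have h2 : 0 < ‖x - a‖ := by
        have := norm_sub_norm_le a x
        rw [norm_sub_rev] at this
        linarith
      have h3 := Real.rpow_le_rpow_of_nonpos h2 h1 (z := -((n : ℝ) + 2 * s))
        (by linarith [(Nat.cast_nonneg n : (0 : ℝ) ≤ n)])
      rw [hA]
      gcongr
    have h4 := mul_le_mul_of_nonneg_left hlow (show 0 ≤ 2 * A⁻¹ * η by positivity)
    have h5 : 2 * A⁻¹ * η * A = 2 * η := by field_simp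
    linarith [(abs_le.1 (hg x hx)).2]
  set D := (‖a‖ - 1) ^ (-(n : ℝ)) with hD
  have hD0 : 0 < D := Real.rpow_pos_of_pos (by linarith) _
  refine ⟨2 * A⁻¹ * D, by positivity, fun u g η hη hu hu0 hL hg x => ?_⟩
  have h1 := hone u g η hη hu hu0 hL hg x
  have h2 := hone (fun x => -1 * u x) (fun x => -1 * g x) η hη (by fun_prop)
    (fun x hx => by simp [hu0 x hx]) (fun x hx => (hL x hx).const_mul _)
    (fun x hx => by simpa using hg x hx) x
  have h3 := ballProfile_le hs0 ha1 x
  rw [finrank_euclideanSpace_fin, ← hD] at h3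
  calc |u x| ≤ 2 * A⁻¹ * η * ballProfile s a x := abs_le.2 ⟨by linarith, h1⟩
    _ ≤ 2 * A⁻¹ * η * (D * (max (1 - ‖x‖ ^ 2) 0) ^ s) := by gcongr
    _ = _ := by ring

end FracLap

section UniformClosure

variable {X : Type*}

/-- The functions that elements of `S` approximate uniformly on `K`. -/
def uniformClosureOn (S : Submodule ℝ (X → ℝ)) (K : Set X) : Submodule ℝ (X → ℝ) where
  carrier := {f | ∀ η > 0, ∃ g ∈ S, ∀ x ∈ K, |f x - g x| ≤ η}
  zero_mem' := fun η hη => ⟨0, S.zero_mem, fun x _ => by simpa using hη.le⟩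
  add_mem' := by
    intro f f' hf hf' η hη
    obtain ⟨g, hg, h⟩ := hf (η / 2) (half_pos hη)
    obtain ⟨g', hg', h'⟩ := hf' (η / 2) (half_pos hη)
    refine ⟨g + g', S.add_mem hg hg', fun x hx => ?_⟩
    calc |(f + f') x - (g + g') x| = |(f x - g x) + (f' x - g' x)| := by
          simp only [Pi.add_apply]; congr 1; ring
      _ ≤ η / 2 + η / 2 := (abs_add_le _ _).trans (add_le_add (h x hx) (h' x hx))
      _ = η := add_halves η
  smul_mem' := by
    intro c f hf η hη
    obtain ⟨g, hg, h⟩ := hf (η / (|c| + 1)) (by positivity)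
    refine ⟨c • g, S.smul_mem c hg, fun x hx => ?_⟩
    calc |(c • f) x - (c • g) x| = |c| * |f x - g x| := by
          rw [← abs_mul]; simp only [Pi.smul_apply, smul_eq_mul]; congr 1; ring
      _ ≤ (|c| + 1) * (η / (|c| + 1)) := by
          gcongr
          · linarith
          · exact h x hx
      _ = η := by field_simp

variable {S : Submodule ℝ (X → ℝ)} {K : Set X}

theorem le_uniformClosureOn : S ≤ uniformClosureOn S K := fun g hg η hη =>
  ⟨g, hg, fun x _ => by simpa using hη.le⟩

theorem mem_uniformClosureOn_of_forall_exists {f : X → ℝ}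
    (h : ∀ η > 0, ∃ g ∈ uniformClosureOn S K, ∀ x ∈ K, |f x - g x| ≤ η) :
    f ∈ uniformClosureOn S K := by
  intro η hη
  obtain ⟨g, hg, h1⟩ := h (η / 2) (half_pos hη)
  obtain ⟨g', hg', h2⟩ := hg (η / 2) (half_pos hη)
  refine ⟨g', hg', fun x hx => ?_⟩
  calc |f x - g' x| ≤ |f x - g x| + |g x - g' x| := abs_sub_le _ _ _
    _ ≤ η / 2 + η / 2 := add_le_add (h1 x hx) (h2 x hx)
    _ = η := add_halves η

theorem deriv_mem_uniformClosureOn [PseudoMetricSpace X] (hK : IsCompact K) {δ : ℝ} (hδ : 0 < δ)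
    {F F' : ℝ → X → ℝ} (hF : ∀ t ∈ Icc 0 δ, F t ∈ uniformClosureOn S K)
    (hd : ∀ t ∈ Icc 0 δ, ∀ x ∈ K, HasDerivAt (fun t => F t x) (F' t x) t)
    (hc : ContinuousOn (Function.uncurry F') (Icc 0 δ ×ˢ K)) :
    F' 0 ∈ uniformClosureOn S K := by
  refine mem_uniformClosureOn_of_forall_exists fun η hη => ?_
  obtain ⟨r, hr, hr'⟩ := Metric.uniformContinuousOn_iff.1
    ((isCompact_Icc.prod hK).uniformContinuousOn_of_continuous hc) η hη
  set τ := min δ (r / 2) with hτ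
  have hτ0 : 0 < τ := lt_min hδ (half_pos hr)
  have hτδ : τ ≤ δ := min_le_left _ _
  have hτr : τ < r := (min_le_right _ _).trans_lt (half_lt_self hr)
  refine ⟨τ⁻¹ • (F τ - F 0), Submodule.smul_mem _ _ (Submodule.sub_mem _
    (hF τ ⟨hτ0.le, hτδ⟩) (hF 0 ⟨le_rfl, hδ.le⟩)), fun x hx => ?_⟩
  obtain ⟨c, hc, hceq⟩ := exists_hasDerivAt_eq_slope (fun t => F t x) (fun t => F' t x) hτ0
    (fun t ht => (hd t ⟨ht.1, ht.2.trans hτδ⟩ x hx).continuousAt.continuousWithinAt)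
    (fun t ht => hd t ⟨ht.1.le, ht.2.le.trans hτδ⟩ x hx)
  have h := hr' (0, x) ⟨⟨le_rfl, hδ.le⟩, hx⟩ (c, x) ⟨⟨hc.1.le, hc.2.le.trans hτδ⟩, hx⟩ (by
    rw [Prod.dist_eq, dist_self, Real.dist_eq, zero_sub, abs_neg, abs_of_pos hc.1]
    exact max_lt (hc.2.trans hτr) hr)
  rw [Real.dist_eq] at h
  simp only [Function.uncurry] at h
  rw [hceq] at h
  simpa [div_eq_inv_mul] using h.le

end UniformClosure

section PoleDensity

variable {E : Type*} [NormedAddCommGroup E] [InnerProductSpace ℝ E]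

theorem hasDerivAt_norm_sub_sq_rpow (m : ℝ) {a v x : E} {t : ℝ} (h : x ≠ a + t • v) :
    HasDerivAt (fun t : ℝ => (‖x - (a + t • v)‖ ^ 2) ^ (-m))
      (2 * m * ⟪x - (a + t • v), v⟫ * (‖x - (a + t • v)‖ ^ 2) ^ (-(m + 1))) t := by
  have h1 : HasDerivAt (fun t : ℝ => x - (a + t • v)) (-v) t := by
    simpa using (((hasDerivAt_id t).smul_const v).const_add a).const_sub x
  have h2 := h1.norm_sq
  have h3 := h2.rpow_const (p := -m) (Or.inl (by
    have := norm_pos_iff.2 (sub_ne_zero.2 h)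
    positivity))
  convert h3 using 1
  rw [inner_neg_right, show -m - 1 = -(m + 1) by ring]
  ring

theorem one_lt_norm_add_smul {a v : E} {t : ℝ} (ha : 1 < ‖a‖) (hv : ‖v‖ = 1)
    (ht : t ∈ Icc 0 ((‖a‖ - 1) / 2)) : 1 < ‖a + t • v‖ := by
  have h1 : ‖a‖ - ‖t • v‖ ≤ ‖a + t • v‖ := by
    have := norm_sub_norm_le a (-(t • v))
    simpa using this
  rw [norm_smul, hv, mul_one, Real.norm_of_nonneg ht.1] at h1
  linarith [ht.2]

theorem ne_of_mem_closedBall {E : Type*} [NormedAddCommGroup E] {b x : E} (hb : 1 < ‖b‖)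
    (hx : x ∈ closedBall (0 : E) 1) :
    x ≠ b := by
  rintro rfl
  exact (mem_closedBall_zero_iff.1 hx).not_gt hb

variable [FiniteDimensional ℝ E] {S : Submodule ℝ (E → ℝ)}

theorem inner_mul_pole_mem {m : ℝ} (hm : m ≠ 0)
    (h : ∀ a : E, 1 < ‖a‖ →
      (fun x => (‖x - a‖ ^ 2) ^ (-m)) ∈ uniformClosureOn S (closedBall (0 : E) 1))
    {a v : E} (ha : 1 < ‖a‖) (hv : ‖v‖ = 1) :
    (fun x => ⟪x - a, v⟫ * (‖x - a‖ ^ 2) ^ (-(m + 1))) ∈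
      uniformClosureOn S (closedBall (0 : E) 1) := by
  have key := deriv_mem_uniformClosureOn (S := S) (isCompact_closedBall (0 : E) 1)
    (show 0 < (‖a‖ - 1) / 2 by linarith)
    (F := fun t x => (‖x - (a + t • v)‖ ^ 2) ^ (-m))
    (F' := fun t x => 2 * m * ⟪x - (a + t • v), v⟫ * (‖x - (a + t • v)‖ ^ 2) ^ (-(m + 1)))
    (fun t ht => h _ (one_lt_norm_add_smul ha hv ht))
    (fun t ht x hx => hasDerivAt_norm_sub_sq_rpow m
      (ne_of_mem_closedBall (one_lt_norm_add_smul ha hv ht) hx)) ?_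
  · have h2 := Submodule.smul_mem _ (2 * m)⁻¹ key
    convert h2 using 1
    ext x
    simp only [zero_smul, add_zero, Pi.smul_apply, smul_eq_mul]
    field_simp
  · unfold Function.uncurry
    refine ContinuousOn.mul (by fun_prop) (ContinuousOn.rpow_const (by fun_prop) ?_)
    rintro ⟨t, x⟩ ⟨ht, hx⟩
    have := norm_pos_iff.2
      (sub_ne_zero.2 (ne_of_mem_closedBall (one_lt_norm_add_smul ha hv ht) hx))
    exact Or.inl (by positivity)

theorem second_deriv_pole_mem {m : ℝ} (hm : m ≠ 0)
    (h : ∀ a : E, 1 < ‖a‖ →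
      (fun x => (‖x - a‖ ^ 2) ^ (-m)) ∈ uniformClosureOn S (closedBall (0 : E) 1))
    {a v : E} (ha : 1 < ‖a‖) (hv : ‖v‖ = 1) :
    (fun x => 2 * (m + 1) * ⟪x - a, v⟫ ^ 2 * (‖x - a‖ ^ 2) ^ (-(m + 2)) -
      (‖x - a‖ ^ 2) ^ (-(m + 1))) ∈ uniformClosureOn S (closedBall (0 : E) 1) := by
  have key := deriv_mem_uniformClosureOn (S := S) (isCompact_closedBall (0 : E) 1)
    (show 0 < (‖a‖ - 1) / 2 by linarith)
    (F := fun t x => ⟪x - (a + t • v), v⟫ * (‖x - (a + t • v)‖ ^ 2) ^ (-(m + 1)))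
    (F' := fun t x => 2 * (m + 1) * ⟪x - (a + t • v), v⟫ ^ 2 *
      (‖x - (a + t • v)‖ ^ 2) ^ (-(m + 2)) - (‖x - (a + t • v)‖ ^ 2) ^ (-(m + 1)))
    (fun t ht => inner_mul_pole_mem hm h (one_lt_norm_add_smul ha hv ht) hv)
    (fun t ht x hx => ?_) ?_
  · simpa only [zero_smul, add_zero] using key
  · have h1 := hasDerivAt_norm_sub_sq_rpow (m + 1)
      (ne_of_mem_closedBall (one_lt_norm_add_smul ha hv ht) hx)
    have h2 : HasDerivAt (fun t : ℝ => x - (a + t • v)) (-v) t := by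
      simpa using (((hasDerivAt_id t).smul_const v).const_add a).const_sub x
    have h3 : HasDerivAt (fun t : ℝ => ⟪x - (a + t • v), v⟫) (-1) t := by
      have := h2.inner ℝ (hasDerivAt_const t v)
      simpa [real_inner_self_eq_norm_sq, hv] using this
    refine (h3.mul h1).congr_deriv ?_
    rw [show m + 1 + 1 = m + 2 by ring]
    ring
  · unfold Function.uncurry
    refine ContinuousOn.sub (ContinuousOn.mul (by fun_prop)
      (ContinuousOn.rpow_const (by fun_prop) ?_)) (ContinuousOn.rpow_const (by fun_prop) ?_) <;>
    · rintro ⟨t, x⟩ ⟨ht, hx⟩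
      have := norm_pos_iff.2
        (sub_ne_zero.2 (ne_of_mem_closedBall (one_lt_norm_add_smul ha hv ht) hx))
      exact Or.inl (by positivity)

theorem pole_add_one_mem {m : ℝ} (hm : 0 < m) (hmd : (Module.finrank ℝ E : ℝ) < 2 * (m + 1))
    (h : ∀ a : E, 1 < ‖a‖ →
      (fun x => (‖x - a‖ ^ 2) ^ (-m)) ∈ uniformClosureOn S (closedBall (0 : E) 1))
    {a : E} (ha : 1 < ‖a‖) :
    (fun x => (‖x - a‖ ^ 2) ^ (-(m + 1))) ∈ uniformClosureOn S (closedBall (0 : E) 1) := by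
  set b := stdOrthonormalBasis ℝ E
  have hsum := Submodule.sum_mem (uniformClosureOn S (closedBall (0 : E) 1))
    (fun i (_ : i ∈ Finset.univ) => second_deriv_pole_mem hm.ne' h ha (b.norm_eq_one i))
  have h2 := Submodule.smul_mem _ (2 * (m + 1) - (Module.finrank ℝ E : ℝ))⁻¹ hsum
  refine mem_uniformClosureOn_of_forall_exists fun η hη => ⟨_, h2, fun x hx => ?_⟩
  have hpos : 0 < ‖x - a‖ ^ 2 := by
    have := norm_pos_iff.2 (sub_ne_zero.2 (ne_of_mem_closedBall ha hx))
    positivity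
  have hpow : ‖x - a‖ ^ 2 * (‖x - a‖ ^ 2) ^ (-(m + 2)) = (‖x - a‖ ^ 2) ^ (-(m + 1)) := by
    rw [← Real.rpow_one_add' hpos.le (by linarith)]
    congr 1; ring
  have hc : 2 * (m + 1) - (Module.finrank ℝ E : ℝ) ≠ 0 := by linarith
  have heq : (2 * (m + 1) - (Module.finrank ℝ E : ℝ))⁻¹ *
      ∑ i, (2 * (m + 1) * ⟪x - a, b i⟫ ^ 2 * (‖x - a‖ ^ 2) ^ (-(m + 2)) -
      (‖x - a‖ ^ 2) ^ (-(m + 1))) = (‖x - a‖ ^ 2) ^ (-(m + 1)) := by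
    rw [Finset.sum_sub_distrib, ← Finset.sum_mul, ← Finset.mul_sum, b.sum_sq_inner_left,
      mul_assoc, hpow, Finset.sum_const, Finset.card_univ, Fintype.card_fin, nsmul_eq_mul]
    field_simp
  simp only [Pi.smul_apply, Finset.sum_apply, smul_eq_mul, heq, sub_self, abs_zero]
  exact hη.le

theorem pole_add_nat_mem {m : ℝ} (hm : 0 < m) (hmd : (Module.finrank ℝ E : ℝ) < 2 * (m + 1))
    (h : ∀ a : E, 1 < ‖a‖ →
      (fun x => (‖x - a‖ ^ 2) ^ (-m)) ∈ uniformClosureOn S (closedBall (0 : E) 1))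
    (k : ℕ) {a : E} (ha : 1 < ‖a‖) :
    (fun x => (‖x - a‖ ^ 2) ^ (-(m + k))) ∈ uniformClosureOn S (closedBall (0 : E) 1) := by
  induction k generalizing a with
  | zero => simpa using h a ha
  | succ k ih =>
    have hk : (0 : ℝ) ≤ k := k.cast_nonneg
    have := pole_add_one_mem (m := m + k) (by linarith) (by linarith) (fun a ha => ih ha) ha
    simpa [add_assoc] using this

end PoleDensity

section ExpDensity

theorem abs_one_sub_rpow_neg_sub_exp_le {N q r P : ℝ} (hP : 0 ≤ P) (hq : |q| ≤ P)
    (hr : |r| ≤ P ^ 2) (hN : 1 ≤ N) (hPN : 4 * P ≤ N) (hPN2 : 9 * P ^ 2 ≤ N) :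
    |(1 - (q / N - r / (4 * N ^ 2))) ^ (-N) - Real.exp q| ≤ Real.exp P * (18 * P ^ 2) / N := by
  have hN0 : 0 < N := by linarith
  set z := q / N - r / (4 * N ^ 2) with hz
  have hz1 : |z| ≤ 2 * P / N := by
    calc |z| ≤ |q / N| + |r / (4 * N ^ 2)| := abs_sub _ _
      _ = |q| / N + |r| / (4 * N ^ 2) := by
          rw [abs_div, abs_div, abs_of_pos hN0, abs_of_pos (show 0 < 4 * N ^ 2 by positivity)]
      _ ≤ P / N + P ^ 2 / (4 * N ^ 2) := by gcongr
      _ ≤ P / N + P / N := by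
          refine add_le_add_right ?_ _
          rw [div_le_div_iff₀ (by positivity) hN0]
          nlinarith [mul_nonneg hP hN0.le, mul_nonneg (mul_nonneg hP hN0.le) hN0.le,
            mul_le_mul_of_nonneg_left hPN (mul_nonneg hP hN0.le)]
      _ = 2 * P / N := by ring
  have hz2 : |z| ≤ 1 / 2 := hz1.trans (by rw [div_le_iff₀ hN0]; linarith)
  have hlog := Real.abs_log_sub_add_sum_range_le (x := z) (by linarith) 1
  simp only [Finset.range_one, Finset.sum_singleton, zero_add, pow_one, Nat.cast_zero, div_one,
    Nat.reduceAdd] at hlog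
  have hlog2 : |z + Real.log (1 - z)| ≤ 8 * P ^ 2 / N ^ 2 := by
    refine hlog.trans ?_
    rw [div_le_iff₀ (by linarith)]
    have h1 : |z| ^ 2 ≤ (2 * P / N) ^ 2 := by gcongr
    have h2 : (2 * P / N) ^ 2 = 4 * (P ^ 2 / N ^ 2) := by ring
    have h3 : 0 ≤ P ^ 2 / N ^ 2 := by positivity
    have h4 : 8 * P ^ 2 / N ^ 2 = 8 * (P ^ 2 / N ^ 2) := by ring
    rw [h4]
    nlinarith
  have hzpos : 0 < 1 - z := by linarith [le_abs_self z]
  have hNz : N * z = q - r / (4 * N) := by rw [hz]; field_simp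
  have hexp : |Real.log (1 - z) * -N - q| ≤ 9 * P ^ 2 / N := by
    have : Real.log (1 - z) * -N - q = -(N * (z + Real.log (1 - z))) + (N * z - q) := by ring
    rw [this]
    calc _ ≤ |-(N * (z + Real.log (1 - z)))| + |N * z - q| := abs_add_le _ _
      _ = N * |z + Real.log (1 - z)| + |r| / (4 * N) := by
          rw [abs_neg, abs_mul, abs_of_pos hN0, hNz, sub_sub_cancel_left, abs_neg, abs_div,
            abs_of_pos (show 0 < 4 * N by positivity)]
      _ ≤ N * (8 * P ^ 2 / N ^ 2) + P ^ 2 / (4 * N) := by gcongr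
      _ = (8 + 1 / 4) * (P ^ 2 / N) := by field_simp
      _ ≤ 9 * (P ^ 2 / N) := by gcongr; norm_num
      _ = _ := by ring
  have hle1 : 9 * P ^ 2 / N ≤ 1 := by rw [div_le_one hN0]; exact hPN2
  have hfin := Real.abs_exp_sub_one_le (hexp.trans hle1)
  rw [Real.rpow_def_of_pos hzpos]
  calc _ = Real.exp q * |Real.exp (Real.log (1 - z) * -N - q) - 1| := by
        rw [← abs_of_pos (Real.exp_pos q), ← abs_mul, abs_of_pos (Real.exp_pos q), mul_sub,
          ← Real.exp_add, mul_one, add_sub_cancel]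
    _ ≤ Real.exp P * (2 * (9 * P ^ 2 / N)) := by
        gcongr
        · exact (le_abs_self q).trans hq
        · exact hfin.trans (by gcongr)
    _ = _ := by ring

variable {E : Type*} [NormedAddCommGroup E] [InnerProductSpace ℝ E]
  {S : Submodule ℝ (E → ℝ)}

theorem exp_inner_mem_of_ne_zero {m : ℝ} (hm : 0 < m)
    (h : ∀ (k : ℕ) (a : E), 1 < ‖a‖ →
      (fun x => (‖x - a‖ ^ 2) ^ (-(m + k))) ∈ uniformClosureOn S (closedBall (0 : E) 1))
    {p : E} (hp : p ≠ 0) :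
    (fun x => Real.exp ⟪x, p⟫) ∈ uniformClosureOn S (closedBall (0 : E) 1) := by
  refine mem_uniformClosureOn_of_forall_exists fun η hη => ?_
  have hP : 0 < ‖p‖ := norm_pos_iff.2 hp
  obtain ⟨k, hk⟩ := exists_nat_ge (1 + 4 * ‖p‖ + 9 * ‖p‖ ^ 2 +
    Real.exp ‖p‖ * (18 * ‖p‖ ^ 2) / η)
  have hq0 : 0 ≤ Real.exp ‖p‖ * (18 * ‖p‖ ^ 2) / η := by positivity
  set N : ℝ := m + k with hN
  have hPsq : 0 < ‖p‖ ^ 2 := by positivity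
  have hN1 : 1 ≤ N := by linarith
  have hN0 : 0 < N := by linarith
  set c : ℝ := 2 * N / ‖p‖ ^ 2 with hc
  have hc0 : 0 < c := by positivity
  have hnorm : ‖c • p‖ = 2 * N / ‖p‖ := by
    rw [norm_smul, Real.norm_of_nonneg hc0.le, hc]; field_simp
  have ha : 1 < ‖c • p‖ := by
    rw [hnorm, one_lt_div hP]; linarith
  refine ⟨(‖c • p‖ ^ 2) ^ N • fun x => (‖x - c • p‖ ^ 2) ^ (-N),
    Submodule.smul_mem _ _ (h k _ ha), fun x hx => ?_⟩
  have hx1 : ‖x‖ ≤ 1 := mem_closedBall_zero_iff.1 hx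
  have hin : |⟪x, p⟫| ≤ ‖p‖ := (abs_real_inner_le_norm x p).trans (by nlinarith)
  have hr : |‖x‖ ^ 2 * ‖p‖ ^ 2| ≤ ‖p‖ ^ 2 := by
    rw [abs_of_nonneg (by positivity)]
    have : ‖x‖ ^ 2 ≤ 1 := by nlinarith [norm_nonneg x]
    nlinarith
  have key := abs_one_sub_rpow_neg_sub_exp_le (N := N) hP.le hin hr hN1 (by linarith)
    (by linarith)
  have heq : (‖c • p‖ ^ 2) ^ N * (‖x - c • p‖ ^ 2) ^ (-N) =
      (1 - (⟪x, p⟫ / N - ‖x‖ ^ 2 * ‖p‖ ^ 2 / (4 * N ^ 2))) ^ (-N) := by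
    have h1 : (‖c • p‖ ^ 2) ^ N = ((‖c • p‖ ^ 2)⁻¹) ^ (-N) := by
      rw [Real.inv_rpow (by positivity), Real.rpow_neg (by positivity), inv_inv]
    rw [h1, ← Real.mul_rpow (by positivity) (by positivity)]
    congr 1
    rw [norm_sub_sq_real, inner_smul_right, hnorm, hc]
    field_simp
    ring
  simp only [Pi.smul_apply, smul_eq_mul]
  rw [heq, abs_sub_comm]
  refine key.trans ?_
  rw [div_le_iff₀ hN0]
  have h5 : Real.exp ‖p‖ * (18 * ‖p‖ ^ 2) / η ≤ N := by linarith [sq_nonneg ‖p‖]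
  rw [div_le_iff₀ hη] at h5
  linarith

theorem exp_inner_mem [Nontrivial E] {m : ℝ} (hm : 0 < m)
    (h : ∀ (k : ℕ) (a : E), 1 < ‖a‖ →
      (fun x => (‖x - a‖ ^ 2) ^ (-(m + k))) ∈ uniformClosureOn S (closedBall (0 : E) 1))
    (p : E) :
    (fun x => Real.exp ⟪x, p⟫) ∈ uniformClosureOn S (closedBall (0 : E) 1) := by
  rcases ne_or_eq p 0 with hp | rfl
  · exact exp_inner_mem_of_ne_zero hm h hp
  refine mem_uniformClosureOn_of_forall_exists fun η hη => ?_
  have hc : 0 < min 1 (η / 2) := lt_min one_pos (half_pos hη)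
  obtain ⟨v, hv⟩ := exists_norm_eq E hc.le
  have hv0 : v ≠ 0 := norm_pos_iff.1 (hv ▸ hc)
  refine ⟨_, exp_inner_mem_of_ne_zero hm h hv0, fun x hx => ?_⟩
  have hx1 : ‖x‖ ≤ 1 := mem_closedBall_zero_iff.1 hx
  have hin : |⟪x, v⟫| ≤ ‖v‖ :=
    (abs_real_inner_le_norm x v).trans (by nlinarith [norm_nonneg v])
  rw [hv] at hin
  rw [inner_zero_right, Real.exp_zero, abs_sub_comm]
  have := Real.abs_exp_sub_one_le (hin.trans (min_le_left _ _))
  linarith [hin.trans (min_le_right _ _)]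

/-- The exponentials `x ↦ exp ⟪x, p⟫` restricted to `K`, as a homomorphism in `p`. -/
noncomputable def expInnerHom (K : Set E) : Multiplicative E →* C(K, ℝ) where
  toFun p := ⟨fun x => Real.exp ⟪(x : E), p.toAdd⟫, by fun_prop⟩
  map_one' := by ext x; simp
  map_mul' p q := by ext x; simp [inner_add_right, Real.exp_add]

theorem expInnerHom_apply (K : Set E) (p : Multiplicative E) (x : K) :
    expInnerHom K p x = Real.exp ⟪(x : E), p.toAdd⟫ := rfl

theorem separatesPoints_adjoin_expInnerHom (K : Set E) :
    (Algebra.adjoin ℝ (MonoidHom.mrange (expInnerHom K) : Set C(K, ℝ))).SeparatesPoints := by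
  intro x y hxy
  refine ⟨_, ⟨expInnerHom K (.ofAdd ((x : E) - y)), Algebra.subset_adjoin ⟨_, rfl⟩, rfl⟩,
    fun heq => hxy ?_⟩
  simp only [expInnerHom_apply] at heq
  have h1 : ⟪(x : E), (x : E) - y⟫ = ⟪(y : E), (x : E) - y⟫ := Real.exp_injective heq
  rw [← sub_eq_zero, ← inner_sub_left, inner_self_eq_zero, sub_eq_zero] at h1
  exact Subtype.ext h1

theorem exists_eq_of_mem_adjoin_expInnerHom {K : Set E}
    (h : ∀ p : E, (fun x => Real.exp ⟪x, p⟫) ∈ uniformClosureOn S K) {g : C(K, ℝ)}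
    (hg : g ∈ Algebra.adjoin ℝ (MonoidHom.mrange (expInnerHom K) : Set C(K, ℝ))) :
    ∃ G ∈ uniformClosureOn S K, ∀ x : K, g x = G x := by
  rw [← Subalgebra.mem_toSubmodule, Algebra.adjoin_eq_span, Submonoid.closure_eq] at hg
  induction hg using Submodule.span_induction with
  | mem g hg =>
    obtain ⟨p, rfl⟩ := hg
    exact ⟨_, h p.toAdd, fun x => expInnerHom_apply K p x⟩
  | zero => exact ⟨0, Submodule.zero_mem _, fun x => rfl⟩
  | add g g' _ _ hg hg' =>
    obtain ⟨G, hG, hGe⟩ := hg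
    obtain ⟨G', hG', hGe'⟩ := hg'
    exact ⟨G + G', Submodule.add_mem _ hG hG', fun x => by simp [hGe, hGe']⟩
  | smul c g _ hg =>
    obtain ⟨G, hG, hGe⟩ := hg
    exact ⟨c • G, Submodule.smul_mem _ c hG, fun x => by simp [hGe]⟩

theorem continuous_mem_uniformClosureOn_of_exp_mem {K : Set E} (hK : IsCompact K)
    (h : ∀ p : E, (fun x => Real.exp ⟪x, p⟫) ∈ uniformClosureOn S K)
    {f : E → ℝ} (hf : Continuous f) : f ∈ uniformClosureOn S K := by
  have : CompactSpace K := isCompact_iff_compactSpace.1 hK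
  refine mem_uniformClosureOn_of_forall_exists fun η hη => ?_
  obtain ⟨⟨g, hgA⟩, hg⟩ :=
    ContinuousMap.exists_mem_subalgebra_near_continuous_of_separatesPoints _
      (separatesPoints_adjoin_expInnerHom K) (fun x : K => f x) (by fun_prop) η hη
  obtain ⟨G, hG, hGe⟩ := exists_eq_of_mem_adjoin_expInnerHom h hgA
  refine ⟨G, hG, fun x hx => ?_⟩
  have h1 : ‖g ⟨x, hx⟩ - f x‖ < η := hg ⟨x, hx⟩
  rw [hGe, Real.norm_eq_abs, abs_sub_comm] at h1
  exact h1.le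

theorem exists_mem_span_pole_near [FiniteDimensional ℝ E] [Nontrivial E] {s : ℝ} (hs : 0 < s)
    {f : E → ℝ} (hf : Continuous f) {η : ℝ} (hη : 0 < η) :
    ∃ g ∈ Submodule.span ℝ {g : E → ℝ | ∃ a : E, 1 < ‖a‖ ∧
      g = fun x => ‖x - a‖ ^ (-((Module.finrank ℝ E : ℝ) + 2 * s))},
      ∀ x ∈ closedBall (0 : E) 1, |f x - g x| ≤ η := by
  have hd : (0 : ℝ) ≤ Module.finrank ℝ E := Nat.cast_nonneg _
  refine continuous_mem_uniformClosureOn_of_exp_mem (isCompact_closedBall _ _) (exp_inner_mem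
    (m := (Module.finrank ℝ E : ℝ) / 2 + s) (by linarith) fun k a ha =>
    pole_add_nat_mem (by linarith) (by linarith) (fun a ha => ?_) k ha) hf η hη
  refine le_uniformClosureOn (Submodule.subset_span ⟨a, ha, ?_⟩)
  ext x
  rw [← rpow_two_mul (norm_nonneg _)]
  congr 1
  ring

end ExpDensity

section BoundaryTrace

theorem one_sub_norm_add_smul_sq {E : Type*} [NormedAddCommGroup E] [InnerProductSpace ℝ E]
    {e ω : E} (he : ‖e‖ = 1) (hω : ‖ω‖ = 1) (ε : ℝ) :
    1 - ‖e + ε • ω‖ ^ 2 = ε * (-2 * ⟪e, ω⟫ - ε) := by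
  rw [norm_add_sq_real, he, norm_smul, hω, inner_smul_right, mul_one, Real.norm_eq_abs, sq_abs]
  ring

variable {n : ℕ} {s εo : ℝ} {e ω : EuclideanSpace ℝ (Fin n)}

theorem rpow_neg_mul_max_rpow (he : ‖e‖ = 1) (hω : ‖ω‖ = 1)
    {ε : ℝ} (hε : 0 < ε) (hin : e + ε • ω ∈ ball (0 : EuclideanSpace ℝ (Fin n)) 1) :
    0 < -2 * ⟪e, ω⟫ - ε ∧
      ε ^ (-s) * (max (1 - ‖e + ε • ω‖ ^ 2) 0) ^ s = (-2 * ⟪e, ω⟫ - ε) ^ s := by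
  have h1 : ‖e + ε • ω‖ < 1 := by simpa using hin
  have h2 : 0 < 1 - ‖e + ε • ω‖ ^ 2 := by nlinarith [norm_nonneg (e + ε • ω)]
  have h3 : 0 < -2 * ⟪e, ω⟫ - ε := by
    rw [one_sub_norm_add_smul_sq he hω] at h2
    exact pos_of_mul_pos_right h2 hε.le
  refine ⟨h3, ?_⟩
  rw [max_eq_left h2.le, one_sub_norm_add_smul_sq he hω, Real.mul_rpow hε.le h3.le,
    Real.rpow_neg hε.le, inv_mul_cancel_left₀ (Real.rpow_pos_of_pos hε s).ne']

theorem tendsto_rpow_neg_mul_ballProfile (hs : 0 < s) (he : ‖e‖ = 1) (hω : ‖ω‖ = 1)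
    (hεo : 0 < εo)
    (hin : ∀ ε ∈ Ioc (0 : ℝ) εo, e + ε • ω ∈ ball (0 : EuclideanSpace ℝ (Fin n)) 1)
    {a : EuclideanSpace ℝ (Fin n)} (ha : 1 < ‖a‖) :
    Tendsto (fun ε : ℝ => ε ^ (-s) * ballProfile s a (e + ε • ω)) (𝓝[>] 0)
      (𝓝 ((-2 * ⟪e, ω⟫) ^ s * ‖e - a‖ ^ (-(n : ℝ)))) := by
  have hea : ‖e - a‖ ≠ 0 := by
    rw [norm_ne_zero_iff, sub_ne_zero]
    rintro rfl
    linarith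
  have hc : Tendsto (fun ε : ℝ => (-2 * ⟪e, ω⟫ - ε) ^ s * ‖e + ε • ω - a‖ ^ (-(n : ℝ))) (𝓝[>] 0)
      (𝓝 ((-2 * ⟪e, ω⟫ - 0) ^ s * ‖e + (0 : ℝ) • ω - a‖ ^ (-(n : ℝ)))) := by
    refine (ContinuousAt.mul (ContinuousAt.rpow_const (by fun_prop) (Or.inr hs.le))
      (ContinuousAt.rpow_const (by fun_prop) (Or.inl ?_))).tendsto.mono_left nhdsWithin_le_nhds
    simpa using hea
  rw [sub_zero, zero_smul, add_zero] at hc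
  refine hc.congr' ?_
  filter_upwards [Ioc_mem_nhdsGT hεo] with ε hε
  rw [← (rpow_neg_mul_max_rpow he hω hε.1 (hin ε hε)).2, ballProfile, finrank_euclideanSpace_fin,
    mul_assoc]

theorem exists_solution_of_mem_span (hn : 1 ≤ n) (hs : s ∈ Ioo (0 : ℝ) 1)
    (he : ‖e‖ = 1) (hω : ‖ω‖ = 1) (hεo : 0 < εo)
    (hin : ∀ ε ∈ Ioc (0 : ℝ) εo, e + ε • ω ∈ ball (0 : EuclideanSpace ℝ (Fin n)) 1)
    {g : EuclideanSpace ℝ (Fin n) → ℝ}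
    (hg : g ∈ Submodule.span ℝ {g : EuclideanSpace ℝ (Fin n) → ℝ |
      ∃ a : EuclideanSpace ℝ (Fin n), 1 < ‖a‖ ∧ g = fun x => ‖x - a‖ ^ (-((n : ℝ) + 2 * s))}) :
    ∃ v : EuclideanSpace ℝ (Fin n) → ℝ, Continuous v ∧
      (∀ x ∉ ball (0 : EuclideanSpace ℝ (Fin n)) 1, v x = 0) ∧
      (∀ x ∈ ball (0 : EuclideanSpace ℝ (Fin n)) 1, HasFracLap n s v x (g x)) ∧
      Integrable (fun z => ballProfile s e z * g z) ∧
      Tendsto (fun ε : ℝ => ε ^ (-s) * v (e + ε • ω)) (𝓝[>] 0)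
        (𝓝 ((-2 * ⟪e, ω⟫) ^ s * (kappaC n s / s * ∫ z, ballProfile s e z * g z))) := by
  have : Nonempty (Fin n) := ⟨⟨0, hn⟩⟩
  induction hg using Submodule.span_induction with
  | mem g hg =>
    obtain ⟨a, ha, rfl⟩ := hg
    set c := profileC n s * (‖a‖ ^ 2 - 1) ^ s with hc
    have hc0 : 0 < c := mul_pos (profileC_pos hn hs) (Real.rpow_pos_of_pos (by nlinarith) _)
    have hb := continuous_ballProfile hs.1 ha
    refine ⟨fun x => c⁻¹ * ballProfile s a x, by fun_prop, fun x hx => ?_, fun x hx => ?_, ?_, ?_⟩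
    · simp [ballProfile_eq_zero hs.1 a (show 1 ≤ ‖x‖ by simpa using hx)]
    · have h1 := (hasFracLap_ballProfile hn hs (by simpa using hx : ‖x‖ < 1) ha).const_mul c⁻¹
      rwa [← mul_assoc (profileC n s), inv_mul_cancel_left₀ hc0.ne'] at h1
    · simpa only [finrank_euclideanSpace_fin] using integrable_ballProfile_mul hs.1 ha he
    · rw [kappaC_mul_integral_ballProfile_mul hn hs ha he, mul_left_comm]
      refine ((tendsto_rpow_neg_mul_ballProfile hs.1 he hω hεo hin ha).const_mul c⁻¹).congr
        fun ε => ?_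
      ring
  | zero =>
    refine ⟨fun _ => 0, continuous_const, fun _ _ => rfl, fun x _ => ?_, by simp, by simp⟩
    simp [HasFracLap]
  | add g g' _ _ hg hg' =>
    obtain ⟨v, hv, hv0, hvL, hvi, hvt⟩ := hg
    obtain ⟨v', hv', hv0', hvL', hvi', hvt'⟩ := hg'
    refine ⟨fun x => v x + v' x, by fun_prop, fun x hx => by simp [hv0 x hx, hv0' x hx],
      fun x hx => (hvL x hx).add hs.1 hv (exists_abs_le_of_eq_zero_off_ball hv hv0) hv'
        (exists_abs_le_of_eq_zero_off_ball hv' hv0') (hvL' x hx), ?_, ?_⟩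
    · simp only [Pi.add_apply, mul_add]
      exact hvi.add hvi'
    · simp only [Pi.add_apply, mul_add]
      rw [integral_add hvi hvi', mul_add, mul_add]
      exact hvt.add hvt'
  | smul c g _ hg =>
    obtain ⟨v, hv, hv0, hvL, hvi, hvt⟩ := hg
    refine ⟨fun x => c * v x, by fun_prop, fun x hx => by simp [hv0 x hx],
      fun x hx => (hvL x hx).const_mul c, ?_, ?_⟩
    · simpa only [Pi.smul_apply, smul_eq_mul, mul_left_comm] using hvi.const_mul c
    · simp only [Pi.smul_apply, smul_eq_mul, mul_left_comm _ c]
      rw [integral_const_mul, mul_left_comm _ c, mul_left_comm _ c]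
      exact hvt.const_mul c

theorem setIntegral_eq_integral_ballProfile (hs : 0 < s) (f : EuclideanSpace ℝ (Fin n) → ℝ) :
    ∫ z in ball (0 : EuclideanSpace ℝ (Fin n)) 1, f z * ((1 - ‖z‖ ^ 2) ^ s / (s * ‖z - e‖ ^ n)) =
      s⁻¹ * ∫ z, ballProfile s e z * f z := by
  rw [← setIntegral_eq_integral_of_forall_compl_eq_zero
    (s := ball (0 : EuclideanSpace ℝ (Fin n)) 1) (f := fun z => ballProfile s e z * f z)
    (fun z hz => by rw [ballProfile_eq_zero hs e (by simpa using hz), zero_mul]),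
    ← integral_const_mul]
  refine setIntegral_congr_fun measurableSet_ball fun z hz => ?_
  rw [ballProfile_of_norm_lt (by simpa using hz), finrank_euclideanSpace_fin,
    Real.rpow_neg (norm_nonneg _), Real.rpow_natCast, div_eq_mul_inv, mul_inv]
  ring

theorem continuous_of_abs_sub_le {E : Type*} [NormedAddCommGroup E] {f : E → ℝ} {α C : ℝ}
    (hα : 0 < α) (h : ∀ x y, |f x - f y| ≤ C * ‖x - y‖ ^ α) : Continuous f := by
  refine continuous_iff_continuousAt.2 fun x => ?_
  have h1 : Tendsto (fun y => C * ‖y - x‖ ^ α) (𝓝 x) (𝓝 (C * ‖x - x‖ ^ α)) :=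
    ContinuousAt.mul continuousAt_const (ContinuousAt.rpow_const (by fun_prop) (Or.inr hα.le))
  rw [sub_self, norm_zero, Real.zero_rpow hα.ne', mul_zero] at h1
  refine tendsto_iff_dist_tendsto_zero.2 (squeeze_zero (fun _ => dist_nonneg) (fun y => ?_) h1)
  rw [Real.dist_eq]
  exact h y x

end BoundaryTrace

/-- Boundary behavior of solutions of `(-Δ)^s u = f` in `B₁`, `u = 0` outside `B₁`:
`lim_{ε→0⁺} ε^{-s} u(e+εω) = κ(n,s) (-2 e·ω)^s ∫_{B₁} f(z) (1-|z|²)^s/(s|z-e|^n) dz`. -/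
theorem solution_boundary_asymptotics
    (n : ℕ) (hn : 1 ≤ n) (s : ℝ) (hs : s ∈ Set.Ioo (0 : ℝ) 1)
    (α : ℝ) (hα : α ∈ Set.Ioo (0 : ℝ) 1)
    (e ω : EuclideanSpace ℝ (Fin n)) (he : ‖e‖ = 1) (hω : ‖ω‖ = 1)
    (εo : ℝ) (hεo : 0 < εo)
    (hin : ∀ ε ∈ Set.Ioc (0 : ℝ) εo,
      e + ε • ω ∈ Metric.ball (0 : EuclideanSpace ℝ (Fin n)) 1)
    (f : EuclideanSpace ℝ (Fin n) → ℝ)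
    (hfH : ∃ C : ℝ, ∀ x y : EuclideanSpace ℝ (Fin n), |f x - f y| ≤ C * ‖x - y‖ ^ α)
    (hfb : ∃ M : ℝ, ∀ x : EuclideanSpace ℝ (Fin n), |f x| ≤ M)
    (hf0 : ∀ x ∉ Metric.ball (0 : EuclideanSpace ℝ (Fin n)) 1, f x = 0)
    (u : EuclideanSpace ℝ (Fin n) → ℝ) (hu : Continuous u)
    (hu0 : ∀ x ∉ Metric.ball (0 : EuclideanSpace ℝ (Fin n)) 1, u x = 0)
    (huf : ∀ x ∈ Metric.ball (0 : EuclideanSpace ℝ (Fin n)) 1, HasFracLap n s u x (f x)) :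
    Tendsto (fun ε : ℝ => ε ^ (-s) * u (e + ε • ω))
      (nhdsWithin 0 (Set.Ioi 0))
      (nhds (kappaC n s * (-2 * ⟪e, ω⟫) ^ s *
        ∫ z in Metric.ball (0 : EuclideanSpace ℝ (Fin n)) 1,
          f z * ((1 - ‖z‖ ^ 2) ^ s / (s * ‖z - e‖ ^ n)))) := by
  have : Nonempty (Fin n) := ⟨⟨0, hn⟩⟩
  have hs0 := hs.1
  have hf : Continuous f := by
    obtain ⟨C, hC⟩ := hfH
    exact continuous_of_abs_sub_le hα.1 hC
  obtain ⟨Mf, hMf⟩ := hfb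
  have hprof := integrable_ballProfile hs0 he
  have hfi : Integrable fun z => ballProfile s e z * f z :=
    hprof.mul_bdd (c := Mf) hf.aestronglyMeasurable (.of_forall hMf)
  obtain ⟨C, hC0, hC⟩ := exists_boundary_bound hn hs
  set T := (-2 * ⟪e, ω⟫) ^ s with hT
  have hT0 : 0 ≤ T := by
    have := (rpow_neg_mul_max_rpow (s := s) he hω hεo (hin εo ⟨hεo, le_rfl⟩)).1
    exact Real.rpow_nonneg (by linarith) _
  have hlim : kappaC n s * T * ∫ z in ball (0 : EuclideanSpace ℝ (Fin n)) 1,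
      f z * ((1 - ‖z‖ ^ 2) ^ s / (s * ‖z - e‖ ^ n)) =
      T * (kappaC n s / s * ∫ z, ballProfile s e z * f z) := by
    rw [setIntegral_eq_integral_ballProfile hs0]
    ring
  rw [hlim]
  set I := ∫ z, ballProfile s e z with hI
  have hI0 : 0 ≤ I := integral_nonneg (ballProfile_nonneg s e)
  set A := C * T + 1 + T * (|kappaC n s / s| * I) with hA
  have hA0 : 0 < A := by positivity
  rw [Metric.tendsto_nhds]
  intro δ hδ
  obtain ⟨η, hη0, hηδ⟩ : ∃ η > 0, A * η < δ :=
    ⟨δ / (2 * A), by positivity, by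
      rw [← mul_div_assoc, div_lt_iff₀ (by positivity)]; nlinarith⟩
  obtain ⟨g, hg, hgf⟩ := exists_mem_span_pole_near hs0 hf hη0
  rw [finrank_euclideanSpace_fin] at hg
  obtain ⟨v, hv, hv0, hvL, hvi, hvt⟩ := exists_solution_of_mem_span hn hs he hω hεo hin hg
  have hdiff := hC (fun x => u x + -1 * v x) (fun x => f x + -1 * g x) η hη0 (by fun_prop)
    (fun x hx => by simp [hu0 x hx, hv0 x hx])
    (fun x hx => (huf x hx).add hs0 hu (exists_abs_le_of_eq_zero_off_ball hu hu0) (by fun_prop)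
      (exists_abs_le_of_eq_zero_off_ball (by fun_prop) (fun x hx => by simp [hv0 x hx]))
      ((hvL x hx).const_mul _))
    (fun x hx => by simpa [← sub_eq_add_neg] using hgf x (ball_subset_closedBall hx))
  have hintegrable : |(∫ z, ballProfile s e z * g z) - ∫ z, ballProfile s e z * f z| ≤ η * I := by
    rw [← integral_sub hvi hfi, hI, ← integral_const_mul, ← Real.norm_eq_abs]
    refine norm_integral_le_of_norm_le (hprof.const_mul η) (.of_forall fun z => ?_)
    rw [← mul_sub, norm_mul, Real.norm_of_nonneg (ballProfile_nonneg s e z), mul_comm]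
    rcases le_or_gt 1 ‖z‖ with hz | hz
    · simp [ballProfile_eq_zero hs0 e hz]
    · refine mul_le_mul_of_nonneg_right ?_ (ballProfile_nonneg s e z)
      rw [Real.norm_eq_abs, abs_sub_comm]
      exact hgf z (by simpa using hz.le)
  filter_upwards [Metric.tendsto_nhds.1 hvt η hη0, Ioc_mem_nhdsGT hεo] with ε hε hεm
  rw [Real.dist_eq] at hε ⊢
  obtain ⟨hpos, hmax⟩ := rpow_neg_mul_max_rpow (s := s) he hω hεm.1 (hin ε hεm)
  have h1 : |ε ^ (-s) * u (e + ε • ω) - ε ^ (-s) * v (e + ε • ω)| ≤ C * η * T := by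
    have hεs : 0 ≤ ε ^ (-s) := Real.rpow_nonneg hεm.1.le _
    rw [← mul_sub, abs_mul, abs_of_nonneg hεs]
    calc _ ≤ ε ^ (-s) * (C * η * (max (1 - ‖e + ε • ω‖ ^ 2) 0) ^ s) := by
          refine mul_le_mul_of_nonneg_left ?_ hεs
          simpa [← sub_eq_add_neg] using hdiff (e + ε • ω)
      _ = C * η * (-2 * ⟪e, ω⟫ - ε) ^ s := by rw [← hmax]; ring
      _ ≤ C * η * T := by
          rw [hT]
          gcongr
          linarith [hεm.1]
  have h2 : |T * (kappaC n s / s * ∫ z, ballProfile s e z * g z) -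
      T * (kappaC n s / s * ∫ z, ballProfile s e z * f z)| ≤ T * (|kappaC n s / s| * (η * I)) := by
    rw [← mul_sub, ← mul_sub, abs_mul, abs_mul, abs_of_nonneg hT0]
    gcongr
  calc _ ≤ C * η * T + (η + T * (|kappaC n s / s| * (η * I))) :=
        (abs_sub_le _ _ _).trans (add_le_add h1 ((abs_sub_le _ _ _).trans (add_le_add hε.le h2)))
    _ = A * η := by rw [hA]; ring
    _ < δ := hηδ
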